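/- arXiv:1911.04777 — 2 statements merged into one kernel-verified Lean document; each statement's English description precedes it below -/
import Mathlib

section
/- Let p ≡ −1 (mod 16) be a prime. Then the class number of the quartic field K' = ℚ(√(2√p)), i.e., the number field ℚ[x]/(x⁴ − 4p), is odd. -/
open Polynomial NumberField

/-!
Put `k = ℚ(√p)` and `L = K' = k(T)`, where `a² - p b² = 2`, the unit `ε = a² - 1 + a b √p` satisfies
`2 ε = (a + b √p)²`, and `T = (a + b √p) √(2√p) / 2`, so that `T² = ε √p`. The class number is shown
to be odd first for `k / ℚ` and then for `L / k`, by Chevalley's ambiguous class argument: if `A`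
has odd class number, the ramified primes of a quadratic extension `B` of `A` are principal, and
every unit of `A` which is a norm of a fraction of `B` is a norm of a unit of `B`, then an ideal
whose square is principal is made invariant under conjugation by Hilbert 90, hence is an ideal
of `A` times ramified primes, hence is principal.

The ramified primes of `k / ℚ` are `(a + b √p)` above `2` and `(√p)`, and `-1` is not a norm because
`p ≡ 3 (mod 4)`. In `L / k` only the prime `(T)` above `√p` is ramified: for suitable signs of `a`
and `b` the element `(1 + T) / 2` is integral, and it differs from its conjugate by `T`. There the
units of `k` which are norms lie in the cyclic group `P` of units positive at the real place of `k`
that becomes complex in `L`. If the norms of units of `L` did not fill `P`, they would be the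
squares of `P`, which are the norms of elements of `P` itself. Every unit of relative norm `1` would
then be `±x²` with `x` again of norm `1`, so the kernel of the norm would be torsion and the unit
rank of `L` at most that of `k`; but these ranks are at least `2` and at most `1` respectively.
-/

open scoped Pointwise

section CardTwo

variable {G : Type*} [Group G] {σ : G}

theorem eq_one_or_eq_of_card_eq_two (hG : Nat.card G = 2) (hσ : σ ≠ 1) (g : G) :
    g = 1 ∨ g = σ := by
  obtain ⟨τ, -, hτ⟩ := (Nat.card_eq_two_iff' (1 : G)).1 hG
  exact or_iff_not_imp_left.2 fun hg => (hτ g hg).trans (hτ σ hσ).symm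

theorem mul_self_eq_one_of_card_eq_two (hG : Nat.card G = 2) : σ * σ = 1 := by
  rw [← sq, ← hG, pow_card_eq_one']

theorem prod_eq_mul_of_card_eq_two [Fintype G] {M : Type*} [CommMonoid M] (hG : Nat.card G = 2)
    (hσ : σ ≠ 1) (f : G → M) : ∏ g, f g = f 1 * f σ :=
  Fintype.prod_eq_mul 1 σ hσ.symm fun g hg =>
    absurd (eq_one_or_eq_of_card_eq_two hG hσ g) (not_or.2 hg)

end CardTwo

theorem odd_card_of_forall_sq_eq_one {H : Type*} [Group H] [Fintype H]
    (h : ∀ x : H, x ^ 2 = 1 → x = 1) : Odd (Fintype.card H) := by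
  rw [← Nat.not_even_iff_odd, even_iff_two_dvd]
  intro hdvd
  obtain ⟨x, hx⟩ := exists_prime_orderOf_dvd_card 2 hdvd
  have hx1 : x = 1 := h x (hx ▸ pow_orderOf_eq_one x)
  simp [hx1] at hx

theorem isPrincipal_span_singleton_mul_iff {B : Type*} [CommRing B] [IsDomain B] {I : Ideal B}
    {g : B} (hg : g ≠ 0) : (Ideal.span {g} * I).IsPrincipal ↔ I.IsPrincipal := by
  constructor
  · rintro ⟨d, hd⟩
    rw [Ideal.submodule_span_eq] at hd
    obtain ⟨e, rfl⟩ : g ∣ d := Ideal.mem_span_singleton.1 <|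
      Ideal.mul_le_left (J := I) (hd ▸ Ideal.mem_span_singleton_self d)
    rw [← Ideal.span_singleton_mul_span_singleton, Ideal.span_singleton_mul_right_inj hg] at hd
    exact ⟨e, hd⟩
  · rintro ⟨e, rfl⟩
    exact ⟨g * e, by simp [Ideal.submodule_span_eq, Ideal.span_singleton_mul_span_singleton]⟩

section Hilbert90

variable {B G : Type*} [CommRing B] [IsDomain B] [Group G] [MulSemiringAction G B] {σ : G}

theorem exists_mul_eq_smul_mul_of_mul_smul_eq [FaithfulSMul G B] (hG : Nat.card G = 2)
    (hσ : σ ≠ 1) {x y : B} (hy : y ≠ 0) (hxy : x * σ • x = y * σ • y) :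
    ∃ c : B, c ≠ 0 ∧ c * y = σ • c * x := by
  have hσσ (z : B) : σ • σ • z = z := by
    rw [smul_smul, mul_self_eq_one_of_card_eq_two hG, one_smul]
  have hresolvent (z : B) : (z * σ • y + σ • z * x) * y = σ • (z * σ • y + σ • z * x) * x := by
    simp only [smul_add, smul_mul', hσσ]
    linear_combination -z * hxy
  by_cases hone : σ • y + x = 0
  · obtain ⟨z, hz⟩ : ∃ z : B, σ • z ≠ z := by
      by_contra! h
      exact hσ (eq_of_smul_eq_smul fun z : B => (h z).trans (one_smul G z).symm)
    refine ⟨_, fun h0 => ?_, hresolvent z⟩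
    have hmul : (σ • z - z) * σ • y = 0 := by linear_combination σ • z * hone - h0
    exact (mul_ne_zero (sub_ne_zero.2 hz) ((smul_ne_zero_iff_ne σ).2 hy)) hmul
  · exact ⟨_, by simpa using hone, hresolvent 1⟩

end Hilbert90

section Galois

variable {A B G : Type*} [CommRing A] [CommRing B] [IsDedekindDomain A] [IsDedekindDomain B]
  [Algebra A B] [Module.Finite A B] [Module.IsTorsionFree A B]
  [Group G] [MulSemiringAction G B] [IsGaloisGroup G A B]

variable (A G) in
theorem algebraMap_intNorm_eq_prod_smul [Fintype G] (x : B) :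
    algebraMap A B (Algebra.intNorm A B x) = ∏ g : G, g • x := by
  let := FractionRing.liftAlgebra A (FractionRing B)
  let := IsFractionRing.mulSemiringAction G B (FractionRing B)
  have := IsGaloisGroup.isGalois G (FractionRing A) (FractionRing B)
  rw [Algebra.algebraMap_intNorm_of_isGalois,
    ← (IsGaloisGroup.mulEquivAlgEquiv G A B).toEquiv.prod_comp]
  rfl

variable (A G) in
theorem map_relNorm_eq_prod_smul [Fintype G] (I : Ideal B) :
    (Ideal.relNorm A I).map (algebraMap A B) = ∏ g : G, g • I := by
  have := IsGaloisGroup.commutes (G := G) (A := A) (B := B)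
  rcases eq_or_ne I ⊥ with rfl | hI
  · simp
  obtain ⟨C, hC⟩ : ∏ g : G, g • I ∣ (Ideal.relNorm A I).map (algebraMap A B) := by
    rw [Ideal.dvd_iff_le, Ideal.map_relNorm, Ideal.span_le]
    rintro _ ⟨x, hx, rfl⟩
    rw [Function.comp_apply, algebraMap_intNorm_eq_prod_smul A G]
    exact Ideal.prod_mem_prod fun g _ => Ideal.smul_mem_pointwise_smul g x I hx
  have hnorm : Ideal.relNorm A C = 1 := by
    have h := congrArg (Ideal.relNorm A) hC
    rw [Ideal.relNorm_algebraMap, map_mul, map_prod] at h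
    simp only [Ideal.relNorm_smul, Finset.prod_const, Finset.card_univ,
      ← IsGaloisGroup.card_eq_finrank' G A B, Nat.card_eq_fintype_card] at h
    exact (mul_eq_left₀ (pow_ne_zero _ (mt Ideal.relNorm_eq_bot_iff.1 hI))).1 h.symm
  have hCtop : C = 1 := by
    rw [Ideal.one_eq_top, Ideal.eq_top_iff_one, ← map_one (algebraMap A B), ← Ideal.mem_comap]
    exact Ideal.relNorm_le_comap A C (by simp [hnorm])
  rw [hC, hCtop, mul_one]

section Quadratic

variable {σ : G}

variable (A) in
theorem algebraMap_intNorm_eq_mul_smul (hG : Nat.card G = 2) (hσ : σ ≠ 1) (x : B) :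
    algebraMap A B (Algebra.intNorm A B x) = x * σ • x := by
  have := Nat.finite_of_card_ne_zero (hG.trans_ne two_ne_zero)
  have := Fintype.ofFinite G
  rw [algebraMap_intNorm_eq_prod_smul A G, prod_eq_mul_of_card_eq_two hG hσ, one_smul]

variable (B) in
theorem intNorm_algebraMap_eq_sq (hG : Nat.card G = 2) (a : A) :
    Algebra.intNorm A B (algebraMap A B a) = a ^ 2 := by
  have := Nat.finite_of_card_ne_zero (hG.trans_ne two_ne_zero)
  have := Fintype.ofFinite G
  have := IsGaloisGroup.commutes (G := G) (A := A) (B := B)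
  apply FaithfulSMul.algebraMap_injective A B
  simp [algebraMap_intNorm_eq_prod_smul A G, ← Nat.card_eq_fintype_card, hG]

variable (A) in
theorem map_relNorm_eq_mul_smul (hG : Nat.card G = 2) (hσ : σ ≠ 1) (I : Ideal B) :
    (Ideal.relNorm A I).map (algebraMap A B) = I * σ • I := by
  have := Nat.finite_of_card_ne_zero (hG.trans_ne two_ne_zero)
  have := Fintype.ofFinite G
  rw [map_relNorm_eq_prod_smul A G, prod_eq_mul_of_card_eq_two hG hσ, one_smul]

variable (A) in
/-- Every prime of the quadratic extension `B` of `A` which is ramified over `A`, that is, whose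
square is generated by the prime of `A` below it, has a generator in `S`. -/
def RamifiedPrimesGeneratedBy (S : Submonoid B) : Prop :=
  ∀ Q : Ideal B, Q.IsPrime → Q ≠ ⊥ → (Q.under A).map (algebraMap A B) = Q ^ 2 →
    ∃ g ∈ S, Q = Ideal.span {g}

variable (A) in
theorem map_under_eq_or_eq_sq_of_smul_eq (hG : Nat.card G = 2) (hσ : σ ≠ 1) {Q : Ideal B}
    (hQ : Q.IsPrime) (hQ0 : Q ≠ ⊥) (hσQ : σ • Q = Q) :
    (Q.under A).map (algebraMap A B) = Q ∨ (Q.under A).map (algebraMap A B) = Q ^ 2 := by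
  obtain ⟨s, hs⟩ := Ideal.exists_relNorm_eq_pow_of_isPrime Q (Q.under A)
  have hsq : Q ^ 2 = (Q.under A).map (algebraMap A B) ^ s := by
    rw [← Ideal.map_pow, ← hs, map_relNorm_eq_mul_smul A hG hσ, hσQ, sq]
  obtain ⟨C, hC⟩ : Q ∣ (Q.under A).map (algebraMap A B) :=
    Ideal.dvd_iff_le.2 Ideal.map_comap_le
  rcases s with - | - | s
  · have : IsUnit Q := (isUnit_pow_iff two_ne_zero).1 (by simp [hsq])
    exact absurd (Ideal.isUnit_iff.1 this) hQ.ne_top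
  · exact .inr (by simpa using hsq.symm)
  · have hCpow : Q ^ s * C ^ (s + 2) = 1 := by
      refine mul_left_cancel₀ (pow_ne_zero 2 hQ0) ?_
      rw [mul_one, ← mul_assoc, ← pow_add, add_comm 2, ← mul_pow, ← hC, ← hsq]
    have hCone : C = 1 :=
      ((isUnit_pow_iff (by lia)).1 (IsUnit.of_mul_eq_one_right _ hCpow)).eq_one
    exact .inl (by rw [hC, hCone, mul_one])

theorem exists_dvd_of_smul_eq {S : Submonoid B} (hG : Nat.card G = 2) (hσ : σ ≠ 1)
    (hram : RamifiedPrimesGeneratedBy A S) {J : Ideal B} (hJ : J ≠ ⊥) (hJtop : J ≠ ⊤)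
    (hσJ : σ • J = J) :
    ∃ (b : Ideal A) (g : B), g ∈ S ∧ b.map (algebraMap A B) * Ideal.span {g} ≠ ⊤ ∧
      σ • (b.map (algebraMap A B) * Ideal.span {g}) = b.map (algebraMap A B) * Ideal.span {g} ∧
      b.map (algebraMap A B) * Ideal.span {g} ∣ J := by
  obtain ⟨Q, hQ, hJQ⟩ := Ideal.exists_le_maximal J hJtop
  have hQJ : Q ∣ J := Ideal.dvd_iff_le.2 hJQ
  have hQ0 : Q ≠ ⊥ := ne_bot_of_le_ne_bot hJ hJQ
  by_cases hσQ : σ • Q = Q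
  · rcases map_under_eq_or_eq_sq_of_smul_eq A hG hσ hQ.isPrime hQ0 hσQ with hq | hq
    · exact ⟨Q.under A, 1, S.one_mem, by simpa [hq] using ⟨hQ.ne_top, hσQ, hQJ⟩⟩
    · obtain ⟨g, hg, hQg⟩ := hram Q hQ.isPrime hQ0 hq
      refine ⟨⊤, g, hg, ?_⟩
      simpa [Ideal.map_top, ← hQg] using ⟨hQ.ne_top, hσQ, hQJ⟩
  · have hσQJ : σ • Q ∣ J := by
      rwa [Ideal.dvd_iff_le, ← hσJ, Ideal.pointwise_smul_le_pointwise_smul_iff]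
    have hσQ0 : σ • Q ≠ ⊥ := ne_bot_of_le_ne_bot hJ (Ideal.dvd_iff_le.1 hσQJ)
    have hσQmax : (σ • Q).IsMaximal := (hQ.isPrime.smul σ).isMaximal hσQ0
    have hcop : IsCoprime Q (σ • Q) :=
      Ideal.isCoprime_iff_sup_eq.2 (hQ.coprime_of_ne hσQmax (Ne.symm hσQ))
    refine ⟨Ideal.relNorm A Q, 1, S.one_mem, ?_⟩
    rw [Ideal.span_singleton_one, Ideal.mul_top, map_relNorm_eq_mul_smul A hG hσ]
    refine ⟨fun h => hQ.ne_top (top_le_iff.1 (h ▸ Ideal.mul_le_left)), ?_,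
      hcop.mul_dvd hQJ hσQJ⟩
    rw [smul_mul', smul_smul, mul_self_eq_one_of_card_eq_two hG, one_smul, mul_comm]

theorem exists_eq_map_mul_span_of_smul_eq {S : Submonoid B} (hG : Nat.card G = 2) (hσ : σ ≠ 1)
    (hram : RamifiedPrimesGeneratedBy A S) {J : Ideal B} (hJ : J ≠ ⊥) (hσJ : σ • J = J) :
    ∃ b : Ideal A, ∃ g ∈ S, J = b.map (algebraMap A B) * Ideal.span {g} := by
  induction J using IsNoetherian.induction with | hgt J ih => ?_
  rcases eq_or_ne J ⊤ with rfl | hJtop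
  · exact ⟨⊤, 1, S.one_mem, by simp [Ideal.map_top]⟩
  obtain ⟨b, g, hg, hItop, hσI, C, rfl⟩ := exists_dvd_of_smul_eq hG hσ hram hJ hJtop hσJ
  have hC0 : C ≠ ⊥ := right_ne_zero_of_mul hJ
  have hlt := lt_of_le_of_ne Ideal.mul_le_right fun h =>
    hItop (Ideal.one_eq_top (R := B) ▸ (mul_eq_right₀ hC0).1 h)
  have hσC : σ • C = C := mul_left_cancel₀ (left_ne_zero_of_mul hJ) <| by
    rwa [smul_mul', hσI] at hσJ
  obtain ⟨b', g', hg', rfl⟩ := ih C hlt hC0 hσC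
  exact ⟨b * b', g * g', S.mul_mem hg hg', by
    rw [Ideal.map_mul, ← Ideal.span_singleton_mul_span_singleton, mul_mul_mul_comm]⟩

variable (A B) in
theorem isPrincipal_of_isPrincipal_map [Fintype (ClassGroup A)] (hG : Nat.card G = 2)
    (hA : Odd (Fintype.card (ClassGroup A))) {I : Ideal A}
    (hI : (I.map (algebraMap A B)).IsPrincipal) : I.IsPrincipal := by
  have := Nat.finite_of_card_ne_zero (hG.trans_ne two_ne_zero)
  obtain ⟨b, hb⟩ := hI
  refine Ideal.IsPrincipal.of_isPrincipal_pow_of_coprime (Nat.coprime_two_left.2 hA)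
    ⟨Algebra.intNorm A B b, ?_⟩
  rw [← hG, IsGaloisGroup.card_eq_finrank' G A B, ← Ideal.relNorm_algebraMap B, hb,
    Ideal.submodule_span_eq, Ideal.relNorm_singleton, Ideal.submodule_span_eq]

theorem isPrincipal_of_isPrincipal_sq_of_smul_eq [Fintype (ClassGroup A)] (hG : Nat.card G = 2)
    (hσ : σ ≠ 1) (hA : Odd (Fintype.card (ClassGroup A)))
    (hram : RamifiedPrimesGeneratedBy A (⊤ : Submonoid B)) {J : Ideal B} (hJ : J ≠ ⊥)
    (hσJ : σ • J = J) (hJ2 : (J ^ 2).IsPrincipal) : J.IsPrincipal := by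
  obtain ⟨b, g, -, rfl⟩ := exists_eq_map_mul_span_of_smul_eq hG hσ hram hJ hσJ
  have hg : g ≠ 0 := mt Ideal.span_singleton_eq_bot.2 (right_ne_zero_of_mul hJ)
  rw [mul_comm] at hJ2 ⊢
  rw [isPrincipal_span_singleton_mul_iff hg]
  rw [mul_pow, Ideal.span_singleton_pow, isPrincipal_span_singleton_mul_iff (pow_ne_zero 2 hg),
    ← Ideal.map_pow] at hJ2
  obtain ⟨β, rfl⟩ : b.IsPrincipal :=
    Ideal.IsPrincipal.of_isPrincipal_pow_of_coprime (Nat.coprime_two_left.2 hA)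
      (isPrincipal_of_isPrincipal_map A B hG hA hJ2)
  exact ⟨algebraMap A B β, by simp [Ideal.submodule_span_eq, Ideal.map_span]⟩

theorem smul_span_singleton_mul_eq (hG : Nat.card G = 2) (hσ : σ ≠ 1) {I : Ideal B} {y z c : B}
    {s : A} (hI2 : I ^ 2 = Ideal.span {z}) (hs : Ideal.relNorm A I = Ideal.span {s}) (hs0 : s ≠ 0)
    (hy : Associated (algebraMap A B s) y) (hc : c * z = σ • c * y) :
    σ • (Ideal.span {c} * I) = Ideal.span {c} * I := by
  have hs0 : algebraMap A B s ≠ 0 :=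
    (map_ne_zero_iff _ (FaithfulSMul.algebraMap_injective A B)).2 hs0
  have hIσI : I * σ • I = Ideal.span {y} := by
    rw [← map_relNorm_eq_mul_smul A hG hσ, hs, Ideal.map_span, Set.image_singleton,
      Ideal.span_singleton_eq_span_singleton]
    exact hy
  refine (Ideal.span_singleton_mul_right_inj (hy.ne_zero_iff.1 hs0)).1 ?_
  calc Ideal.span {y} * σ • (Ideal.span {c} * I)
    _ = Ideal.span {c * z} * σ • I := by
      rw [hc, smul_mul', Ideal.smul_closure, Set.smul_set_singleton, ← mul_assoc,
        Ideal.span_singleton_mul_span_singleton, mul_comm y]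
    _ = Ideal.span {c} * I * (I * σ • I) := by
      rw [← Ideal.span_singleton_mul_span_singleton, ← hI2]; ring
    _ = Ideal.span {y} * (Ideal.span {c} * I) := by rw [hIσI, mul_comm]

theorem isPrincipal_of_isPrincipal_sq [Fintype (ClassGroup A)] (hG : Nat.card G = 2)
    (hσ : σ ≠ 1) (hA : Odd (Fintype.card (ClassGroup A)))
    (hram : RamifiedPrimesGeneratedBy A (⊤ : Submonoid B))
    (hnorm : ∀ (u : Aˣ) (x y : B), x ≠ 0 → Algebra.intNorm A B y = u * Algebra.intNorm A B x →
      u ∈ (Units.map (Algebra.intNorm A B)).range)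
    {I : Ideal B} (hI : I ≠ ⊥) (hI2 : (I ^ 2).IsPrincipal) : I.IsPrincipal := by
  have := IsGaloisGroup.faithful (G := G) (B := B) A
  obtain ⟨z, hz⟩ := hI2
  rw [Ideal.submodule_span_eq] at hz
  have hz0 : z ≠ 0 := by
    rintro rfl
    exact pow_ne_zero 2 hI (hz.trans Ideal.span_singleton_zero)
  have hnormsq : Ideal.relNorm A I ^ 2 = Ideal.span {Algebra.intNorm A B z} := by
    rw [← map_pow, hz, Ideal.relNorm_singleton]
  obtain ⟨s, hs⟩ : (Ideal.relNorm A I).IsPrincipal :=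
    Ideal.IsPrincipal.of_isPrincipal_pow_of_coprime (Nat.coprime_two_left.2 hA) ⟨_, hnormsq⟩
  rw [Ideal.submodule_span_eq] at hs
  have hs0 : s ≠ 0 := by
    rintro rfl
    exact hI (Ideal.relNorm_eq_bot_iff.1 (hs.trans Ideal.span_singleton_zero))
  have hsB : algebraMap A B s ≠ 0 :=
    (map_ne_zero_iff _ (FaithfulSMul.algebraMap_injective A B)).2 hs0
  have hsnorm := intNorm_algebraMap_eq_sq B hG s
  obtain ⟨u, hu⟩ : Associated (s ^ 2) (Algebra.intNorm A B z) := by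
    rw [← Ideal.span_singleton_eq_span_singleton, ← hnormsq, hs, Ideal.span_singleton_pow]
  obtain ⟨v, rfl⟩ := hnorm u _ z hsB (by rw [← hu, hsnorm, mul_comm])
  have hnormeq : algebraMap A B s * v * σ • (algebraMap A B s * v) = z * σ • z := by
    simp only [← algebraMap_intNorm_eq_mul_smul A hG hσ, map_mul, ← hu, hsnorm]
    rfl
  obtain ⟨c, hc0, hc⟩ := exists_mul_eq_smul_mul_of_mul_smul_eq hG hσ hz0 hnormeq
  have hσJ := smul_span_singleton_mul_eq hG hσ hz hs hs0 ⟨v, rfl⟩ hc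
  rw [← isPrincipal_span_singleton_mul_iff hc0]
  refine isPrincipal_of_isPrincipal_sq_of_smul_eq hG hσ hA hram ?_ hσJ ?_
  · exact mul_ne_zero (mt Ideal.span_singleton_eq_bot.1 hc0) hI
  · exact ⟨c ^ 2 * z, by rw [mul_pow, hz, Ideal.span_singleton_pow,
      Ideal.span_singleton_mul_span_singleton, Ideal.submodule_span_eq]⟩

theorem odd_card_classGroup_of_intNorm [Fintype (ClassGroup A)] [Fintype (ClassGroup B)]
    (hG : Nat.card G = 2) (hσ : σ ≠ 1) (hA : Odd (Fintype.card (ClassGroup A)))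
    (hram : RamifiedPrimesGeneratedBy A (⊤ : Submonoid B))
    (hnorm : ∀ (u : Aˣ) (x y : B), x ≠ 0 → Algebra.intNorm A B y = u * Algebra.intNorm A B x →
      u ∈ (Units.map (Algebra.intNorm A B)).range) : Odd (Fintype.card (ClassGroup B)) := by
  refine odd_card_of_forall_sq_eq_one fun c hc => ?_
  obtain ⟨⟨I, hI⟩, rfl⟩ := ClassGroup.mk0_surjective c
  rw [← map_pow, SubmonoidClass.mk_pow, ClassGroup.mk0_eq_one_iff] at hc
  exact (ClassGroup.mk0_eq_one_iff hI).2 <|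
    isPrincipal_of_isPrincipal_sq hG hσ hA hram hnorm (nonZeroDivisors.ne_zero hI) hc

end Quadratic

end Galois

section Module

variable {R M N : Type*} [CommRing R] [IsDomain R] [AddCommGroup M] [Module R M]

theorem isTorsion_of_forall_exists_add_smul [Module.Finite R M] {r : R} (hr : ¬IsUnit r)
    (h : ∀ x : M, ∃ t ∈ Submodule.torsion R M, ∃ y, x = t + r • y) : Module.IsTorsion R M := by
  have hsup : ⊤ ≤ Submodule.torsion R M ⊔ Ideal.span {r} • ⊤ := fun x _ => by
    obtain ⟨t, ht, y, rfl⟩ := h x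
    exact Submodule.add_mem_sup ht
      (Submodule.smul_mem_smul (Ideal.mem_span_singleton_self r) Submodule.mem_top)
  obtain ⟨s, hs, hsM⟩ := Submodule.exists_sub_one_mem_and_smul_le_of_fg_of_le_sup
    Module.Finite.fg_top le_top hsup
  have hs0 : s ≠ 0 := by
    rintro rfl
    exact hr (isUnit_of_dvd_unit (Ideal.mem_span_singleton.1 hs) (by simp))
  intro x
  obtain ⟨a, ha⟩ := (Submodule.mem_torsion_iff _).1
    (hsM (Submodule.smul_mem_pointwise_smul x s ⊤ Submodule.mem_top))
  exact ⟨a * ⟨s, mem_nonZeroDivisors_of_ne_zero hs0⟩, by rwa [mul_smul]⟩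

theorem finrank_le_finrank_of_ker [IsNoetherian R M] [AddCommGroup N] [Module R N]
    [Module.Finite R N] {r : R} (hr : ¬IsUnit r) (f : M →ₗ[R] N)
    (h : ∀ x, f x = 0 → ∃ t ∈ Submodule.torsion R M, ∃ y, f y = 0 ∧ x = t + r • y) :
    Module.finrank R M ≤ Module.finrank R N := by
  have htorsion : Module.IsTorsion R (LinearMap.ker f) := by
    refine isTorsion_of_forall_exists_add_smul hr fun ⟨x, hx⟩ => ?_
    obtain ⟨t, ht, y, hy, rfl⟩ := h x hx
    have hft : f t = 0 := by simpa [hy] using hx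
    refine ⟨⟨t, hft⟩, ?_, ⟨y, hy⟩, rfl⟩
    simpa [Submodule.mem_torsion_iff, Subtype.ext_iff] using ht
  have hrank := Submodule.finrank_quotient_add_finrank (LinearMap.ker f)
  rw [Module.finrank_eq_zero_iff_isTorsion.2 htorsion, add_zero,
    f.quotKerEquivRange.finrank_eq] at hrank
  exact hrank ▸ Submodule.finrank_le _

end Module

section Units

variable {A B G : Type*} [CommRing A] [CommRing B] [IsDedekindDomain A] [IsDedekindDomain B]
  [Algebra A B] [Module.Finite A B] [Module.IsTorsionFree A B]
  [Group G] [MulSemiringAction G B] [IsGaloisGroup G A B] {σ : G}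

theorem exists_smul_eq_or_eq_neg_of_intNorm_eq_one [Fintype (ClassGroup A)] (hG : Nat.card G = 2)
    (hσ : σ ≠ 1) (hA : Odd (Fintype.card (ClassGroup A))) {S : Submonoid B}
    (hram : RamifiedPrimesGeneratedBy A S) (hS : ∀ g ∈ S, σ • g = g ∨ σ • g = -g) {u : Bˣ}
    (hu : Algebra.intNorm A B u = 1) :
    ∃ w : Bˣ, σ • (w : B) = u * w ∨ σ • (w : B) = -(u * w) := by
  have := IsGaloisGroup.faithful (G := G) (B := B) A
  have := IsGaloisGroup.commutes (G := G) (A := A) (B := B)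
  obtain ⟨c, hc0, hc⟩ := exists_mul_eq_smul_mul_of_mul_smul_eq hG hσ (x := 1) u.ne_zero (by
    rw [smul_one, one_mul, ← algebraMap_intNorm_eq_mul_smul A hG hσ, hu, map_one])
  rw [mul_one] at hc
  have hσc : σ • Ideal.span {c} = Ideal.span {c} := by
    rw [Ideal.smul_closure, Set.smul_set_singleton, ← hc,
      Ideal.span_singleton_mul_right_unit u.isUnit]
  obtain ⟨b, g, hg, hcb⟩ := exists_eq_map_mul_span_of_smul_eq (A := A) hG hσ hram
    (mt Ideal.span_singleton_eq_bot.1 hc0) hσc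
  have hg0 : g ≠ 0 := by
    rintro rfl
    exact hc0 (by simpa using hcb)
  obtain ⟨β, rfl⟩ : b.IsPrincipal := isPrincipal_of_isPrincipal_map A B hG hA <|
    (isPrincipal_span_singleton_mul_iff hg0).1 ⟨c, by rw [mul_comm, ← hcb, Ideal.submodule_span_eq]⟩
  rw [Ideal.submodule_span_eq, Ideal.map_span, Set.image_singleton,
    Ideal.span_singleton_mul_span_singleton, eq_comm, Ideal.span_singleton_eq_span_singleton] at hcb
  obtain ⟨w, rfl⟩ := hcb
  simp only [smul_mul', smul_algebraMap] at hc
  refine ⟨w, (hS g hg).imp (fun hσg => ?_) fun hσg => ?_⟩ <;> rw [hσg] at hc <;>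
    apply mul_left_cancel₀ (left_ne_zero_of_mul hc0)
  · linear_combination -hc
  · linear_combination hc

theorem exists_eq_sq_or_eq_neg_sq_of_intNorm_eq_one [Fintype (ClassGroup A)]
    (hG : Nat.card G = 2) (hσ : σ ≠ 1) (hA : Odd (Fintype.card (ClassGroup A))) {S : Submonoid B}
    (hram : RamifiedPrimesGeneratedBy A S) (hS : ∀ g ∈ S, σ • g = g ∨ σ • g = -g)
    (hsq : ∀ v : Bˣ, ∃ a : Aˣ, Algebra.intNorm A B v = a ^ 2) {u : Bˣ}
    (hu : Algebra.intNorm A B u = 1) :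
    ∃ x : Bˣ, Algebra.intNorm A B x = 1 ∧ (u = x ^ 2 ∨ u = -x ^ 2) := by
  obtain ⟨w, hw⟩ := exists_smul_eq_or_eq_neg_of_intNorm_eq_one hG hσ hA hram hS hu
  obtain ⟨a, ha⟩ := hsq w
  set α : Bˣ := Units.map (algebraMap A B) a
  have hwσw : (w : B) * σ • (w : B) = α ^ 2 := by
    rw [← algebraMap_intNorm_eq_mul_smul A hG hσ, ha, map_pow]
    rfl
  refine ⟨α * w⁻¹, ?_, ?_⟩
  · have hNα : Algebra.intNorm A B α = a ^ 2 := intNorm_algebraMap_eq_sq B hG (a : A)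
    have hNw : Algebra.intNorm A B w * Algebra.intNorm A B ↑w⁻¹ = 1 := by
      rw [← map_mul, Units.mul_inv, map_one]
    rw [Units.val_mul, map_mul, hNα, ← ha, hNw]
  · rw [mul_pow, inv_pow, ← div_eq_mul_inv, ← neg_div, eq_div_iff_mul_eq', eq_div_iff_mul_eq']
    simp only [Units.ext_iff, Units.val_mul, Units.val_neg, Units.val_pow_eq_pow_val]
    rcases hw with hw | hw <;> rw [hw] at hwσw
    · left
      linear_combination hwσw
    · right
      linear_combination -hwσw

theorem finrank_units_le_of_forall_intNorm_eq_sq [Fintype (ClassGroup A)]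
    [Module.Finite ℤ (Additive Aˣ)] [Module.Finite ℤ (Additive Bˣ)]
    (hG : Nat.card G = 2) (hσ : σ ≠ 1) (hA : Odd (Fintype.card (ClassGroup A))) {S : Submonoid B}
    (hram : RamifiedPrimesGeneratedBy A S) (hS : ∀ g ∈ S, σ • g = g ∨ σ • g = -g)
    (hsq : ∀ v : Bˣ, ∃ a : Aˣ, Algebra.intNorm A B v = a ^ 2) :
    Module.finrank ℤ (Additive Bˣ) ≤ Module.finrank ℤ (Additive Aˣ) := by
  let N : Additive Bˣ →ₗ[ℤ] Additive Aˣ :=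
    (MonoidHom.toAdditive (Units.map (Algebra.intNorm A B))).toIntLinearMap
  have hN (u : Bˣ) : N (.ofMul u) = 0 ↔ Algebra.intNorm A B u = 1 := by
    rw [← Units.val_one, ← Units.coe_map, ← Units.ext_iff]
    rfl
  have hneg : Additive.ofMul (-1 : Bˣ) ∈ Submodule.torsion ℤ (Additive Bˣ) :=
    (Submodule.mem_torsion_iff _).2 ⟨⟨2, mem_nonZeroDivisors_of_ne_zero two_ne_zero⟩, by
      simp [Submonoid.smul_def, ← ofMul_zpow]⟩
  refine finrank_le_finrank_of_ker (r := 2) (by decide) N fun u hu => ?_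
  obtain ⟨x, hx, hux⟩ := exists_eq_sq_or_eq_neg_sq_of_intNorm_eq_one hG hσ hA hram hS hsq
    (u := u.toMul) ((hN _).1 hu)
  rcases hux with hux | hux
  · exact ⟨0, zero_mem _, .ofMul x, (hN x).2 hx, by
      rw [zero_add, ← ofMul_zpow]; exact hux⟩
  · exact ⟨.ofMul (-1), hneg, .ofMul x, (hN x).2 hx, by
      rw [← ofMul_zpow, ← ofMul_mul, neg_one_mul]; exact hux⟩

end Units

theorem eq_top_or_forall_isSquare_of_isCyclic {P : Type*} [Group P] [IsCyclic P] {H : Subgroup P}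
    (hH : ∀ x : P, x ^ 2 ∈ H) : H = ⊤ ∨ ∀ h ∈ H, IsSquare h := by
  obtain ⟨g, hg⟩ := IsCyclic.exists_generator (α := P)
  by_cases hgH : g ∈ H
  · exact .inl (eq_top_iff.2 fun x _ => Subgroup.zpowers_le.2 hgH (hg x))
  refine .inr fun h hh => ?_
  obtain ⟨n, rfl⟩ := Subgroup.mem_zpowers_iff.1 (hg h)
  rcases Int.even_or_odd' n with ⟨m, rfl | rfl⟩
  · exact ⟨g ^ m, by rw [← zpow_add, two_mul]⟩
  · rw [zpow_add_one, zpow_mul', zpow_ofNat, H.mul_mem_cancel_left (hH _)] at hh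
    exact absurd hh hgH

section PosUnits

variable {A R : Type*} [CommRing A] [CommRing R] [LinearOrder R] [IsStrictOrderedRing R]
  {ψ : A →+* R}

variable (ψ) in
/-- The units of `A` which are positive at the real place `ψ`. -/
def posUnits : Subgroup Aˣ :=
  (Units.posSubgroup R).comap (Units.map ψ)

theorem mem_posUnits {u : Aˣ} : u ∈ posUnits ψ ↔ 0 < ψ u := Iff.rfl

theorem isMulTorsionFree_posUnits (hψ : Function.Injective ψ) : IsMulTorsionFree (posUnits ψ) := by
  refine ⟨fun n hn u v huv => Subtype.ext (Units.ext (hψ ?_))⟩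
  have hpow : ψ (u : Aˣ) ^ n = ψ (v : Aˣ) ^ n := by
    simpa using congrArg (fun w : posUnits ψ => ψ (w : Aˣ)) huv
  exact (pow_left_inj₀ (mem_posUnits.1 u.2).le (mem_posUnits.1 v.2).le hn).1 hpow

theorem isCyclic_posUnits (hψ : Function.Injective ψ) [Module.Finite ℤ (Additive Aˣ)]
    (hrank : Module.finrank ℤ (Additive Aˣ) ≤ 1) : IsCyclic (posUnits ψ) := by
  have := isMulTorsionFree_posUnits hψ
  let ι : Additive (posUnits ψ) →ₗ[ℤ] Additive Aˣ :=
    (MonoidHom.toAdditive (posUnits ψ).subtype).toIntLinearMap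
  have hι : Function.Injective ι := (posUnits ψ).subtype_injective
  have : Module.Finite ℤ (Additive (posUnits ψ)) := .of_injective ι hι
  have hrankP : Module.finrank ℤ (Additive (posUnits ψ)) ≤ 1 :=
    (LinearEquiv.ofInjective ι hι).finrank_eq.trans_le ((Submodule.finrank_le _).trans hrank)
  obtain ⟨g, hg⟩ := finrank_le_one_iff.1 hrankP
  exact isAddCyclic_additive_iff.1 ⟨g, hg⟩

end PosUnits

section RealPlace

variable {A B G : Type*} [CommRing A] [CommRing B] [IsDedekindDomain A] [IsDedekindDomain B]
  [Algebra A B] [Module.Finite A B] [Module.IsTorsionFree A B]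
  [Group G] [MulSemiringAction G B] [IsGaloisGroup G A B] {σ : G}
  {R : Type*} [CommRing R] [LinearOrder R] [IsStrictOrderedRing R] {ψ : A →+* R}

theorem range_map_intNorm_eq_posUnits_or_forall_eq_sq [IsCyclic (posUnits ψ)]
    (hG : Nat.card G = 2) (hpos : ∀ x : B, x ≠ 0 → 0 < ψ (Algebra.intNorm A B x)) :
    (Units.map (Algebra.intNorm A B)).range = posUnits ψ ∨
      ∀ v : Bˣ, ∃ a : Aˣ, Algebra.intNorm A B v = a ^ 2 := by
  set N := Units.map (Algebra.intNorm A B)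
  have hle : N.range ≤ posUnits ψ := by
    rintro _ ⟨v, rfl⟩
    exact hpos v v.ne_zero
  have hsq (x : posUnits ψ) : x ^ 2 ∈ N.range.subgroupOf (posUnits ψ) :=
    Subgroup.mem_subgroupOf.2 ⟨Units.map (algebraMap A B) (x : Aˣ), by
      ext; simp [N, intNorm_algebraMap_eq_sq B hG]⟩
  refine (eq_top_or_forall_isSquare_of_isCyclic hsq).imp (fun h => ?_) fun h v => ?_
  · exact hle.antisymm (Subgroup.subgroupOf_eq_top.1 h)
  · obtain ⟨a, ha⟩ := h ⟨N v, hle ⟨v, rfl⟩⟩ (Subgroup.mem_subgroupOf.2 ⟨v, rfl⟩)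
    exact ⟨a, by simpa [N, Subtype.ext_iff, Units.ext_iff, sq] using ha⟩

theorem odd_card_classGroup_of_forall_intNorm_pos [Fintype (ClassGroup A)]
    [Fintype (ClassGroup B)] [Module.Finite ℤ (Additive Aˣ)] [Module.Finite ℤ (Additive Bˣ)]
    (hG : Nat.card G = 2) (hσ : σ ≠ 1) (hA : Odd (Fintype.card (ClassGroup A))) {S : Submonoid B}
    (hram : RamifiedPrimesGeneratedBy A S) (hS : ∀ g ∈ S, σ • g = g ∨ σ • g = -g)
    (hψ : Function.Injective ψ) (hpos : ∀ x : B, x ≠ 0 → 0 < ψ (Algebra.intNorm A B x))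
    (hrankA : Module.finrank ℤ (Additive Aˣ) ≤ 1)
    (hrankB : Module.finrank ℤ (Additive Aˣ) < Module.finrank ℤ (Additive Bˣ)) :
    Odd (Fintype.card (ClassGroup B)) := by
  have := isCyclic_posUnits hψ hrankA
  rcases range_map_intNorm_eq_posUnits_or_forall_eq_sq hG hpos with hrange | hsq
  · refine odd_card_classGroup_of_intNorm hG hσ hA (fun Q hQ hQ0 hq => ?_) fun u x y hx hxy => ?_
    · exact (hram Q hQ hQ0 hq).imp fun g hg => ⟨trivial, hg.2⟩
    · have hNx := hpos x hx
      have hy : y ≠ 0 := by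
        rintro rfl
        have hNx0 : Algebra.intNorm A B x = 0 := by
          simpa using hxy.symm
        simp [hNx0] at hNx
      rw [hrange, mem_posUnits]
      have hNy := hpos y hy
      rw [hxy, map_mul] at hNy
      exact (pos_iff_pos_of_mul_pos hNy).2 hNx
  · exact absurd (finrank_units_le_of_forall_intNorm_eq_sq hG hσ hA hram hS hsq) hrankB.not_ge

end RealPlace

section Ramification

variable {A B G : Type*} [CommRing A] [CommRing B] [IsDedekindDomain A] [IsDedekindDomain B]
  [Algebra A B]

theorem eq_span_singleton_of_map_under_eq_sq {Q : Ideal B} [Q.IsPrime]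
    (hQ : (Q.under A).map (algebraMap A B) = Q ^ 2) {π : A} (hπ : Prime π) (hπQ : π ∈ Q.under A)
    {γ : B} (hγ : Associated (algebraMap A B π) (γ ^ 2)) : Q = Ideal.span {γ} := by
  have hmax : (Ideal.span {π}).IsMaximal :=
    ((Ideal.span_singleton_prime hπ.ne_zero).2 hπ).isMaximal (by simpa using hπ.ne_zero)
  have hunder : Q.under A = Ideal.span {π} :=
    (hmax.eq_of_le Ideal.IsPrime.ne_top' ((Ideal.span_singleton_le_iff_mem _).2 hπQ)).symm
  rw [hunder, Ideal.map_span, Set.image_singleton, Ideal.span_singleton_eq_span_singleton.2 hγ,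
    ← Ideal.span_singleton_pow] at hQ
  exact (pow_left_inj two_ne_zero).1 hQ.symm

variable [Module.Finite A B] [Module.IsTorsionFree A B]
  [Group G] [MulSemiringAction G B] [IsGaloisGroup G A B]

theorem surjective_algebraMap_quotient_of_map_under_eq_sq [PerfectField (FractionRing A)]
    (hG : Nat.card G = 2) {Q : Ideal B} [Q.IsPrime] (hQ0 : Q ≠ ⊥)
    (hQ : (Q.under A).map (algebraMap A B) = Q ^ 2) :
    Function.Surjective (algebraMap A (B ⧸ Q)) := by
  have := Nat.finite_of_card_ne_zero (hG.trans_ne two_ne_zero)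
  have : Q.IsMaximal := Ideal.IsPrime.isMaximal ‹_› hQ0
  have hunder : Q.under A ≠ ⊥ := mt Ideal.eq_bot_of_comap_eq_bot hQ0
  have hinertia : Q.inertiaDeg A = 1 := by
    have h := Ideal.relNorm_algebraMap B (Q.under A)
    rw [hQ, map_pow, Ideal.relNorm_eq_pow_of_isMaximal Q (Q.under A),
      ← IsGaloisGroup.card_eq_finrank' G A B, hG, pow_left_inj two_ne_zero] at h
    exact (Ideal.pow_right_strictAnti _ hunder Ideal.IsPrime.ne_top').injective
      (h.trans (pow_one _).symm)
  let := Ideal.Quotient.field (Q.under A)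
  rw [Ideal.inertiaDeg_eq_of_isMaximal (Q.under A) Q,
    Algebra.finrank_eq_one_iff_bijective_algebraMap] at hinertia
  exact hinertia.2.comp Ideal.Quotient.mk_surjective

theorem sub_smul_mem_of_map_under_eq_sq [PerfectField (FractionRing A)] (hG : Nat.card G = 2)
    {Q : Ideal B} [Q.IsPrime] (hQ0 : Q ≠ ⊥) (hQ : (Q.under A).map (algebraMap A B) = Q ^ 2)
    (σ : G) (x : B) : x - σ • x ∈ Q := by
  have := IsGaloisGroup.commutes (G := G) (A := A) (B := B)
  obtain ⟨a, ha⟩ := surjective_algebraMap_quotient_of_map_under_eq_sq hG hQ0 hQ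
    (Ideal.Quotient.mk Q x)
  have hy : x - algebraMap A B a ∈ Q := Ideal.Quotient.eq.1 ha.symm
  have hσQ : σ • Q ^ 2 = Q ^ 2 := by
    rw [← hQ]
    simp only [Ideal.pointwise_smul_def, Ideal.map_map]
    congr 1
    ext a
    simp
  have hσy : σ • (x - algebraMap A B a) ∈ Q := by
    refine Ideal.IsPrime.mem_of_pow_mem ‹_› 2 (Ideal.pow_le_self two_ne_zero ?_)
    rw [← hσQ, ← smul_pow']
    exact Ideal.smul_mem_pointwise_smul σ _ _ (Ideal.pow_mem_pow hy 2)
  rw [smul_sub, smul_algebraMap] at hσy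
  simpa using Q.sub_mem hy hσy

end Ramification

section Pell

variable {p : ℕ}

theorem exists_eq_sq_of_mul_eq_sq {m n y : ℤ} (hm : 0 ≤ m) (hmn : IsCoprime m n)
    (h : m * n = y ^ 2) : ∃ r : ℤ, m = r ^ 2 := by
  obtain ⟨r, hr | hr⟩ := Int.sq_of_isCoprime hmn h
  · exact ⟨r, hr⟩
  · exact ⟨0, by linarith [sq_nonneg r]⟩

theorem exists_eq_prime_mul_sq_of_mul_eq {m n y : ℤ} (hp : p.Prime) (hm : 0 ≤ m) (hn : 0 ≤ n)
    (hmn : IsCoprime m n) (h : m * n = p * y ^ 2) (hpm : (p : ℤ) ∣ m) :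
    ∃ r t : ℤ, m = p * r ^ 2 ∧ n = t ^ 2 := by
  have hp0 : (0 : ℤ) < p := by exact_mod_cast hp.pos
  obtain ⟨m, rfl⟩ := hpm
  have hmul : m * n = y ^ 2 := mul_left_cancel₀ hp0.ne' (by rw [← h, mul_assoc])
  have hcop : IsCoprime m n := hmn.of_mul_left_right
  obtain ⟨r, rfl⟩ := exists_eq_sq_of_mul_eq_sq (nonneg_of_mul_nonneg_right hm hp0) hcop hmul
  obtain ⟨t, rfl⟩ := exists_eq_sq_of_mul_eq_sq hn hcop.symm (mul_comm n _ ▸ hmul)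
  exact ⟨r, t, rfl, rfl⟩

theorem exists_eq_prime_mul_sq_or_of_mul_eq {m n y : ℤ} (hp : p.Prime) (hm : 0 ≤ m) (hn : 0 ≤ n)
    (hmn : IsCoprime m n) (h : m * n = p * y ^ 2) :
    ∃ r t : ℤ, (m = p * r ^ 2 ∧ n = t ^ 2) ∨ (n = p * r ^ 2 ∧ m = t ^ 2) := by
  rcases (Nat.prime_iff_prime_int.1 hp).dvd_or_dvd (Dvd.intro _ h.symm) with hpm | hpn
  · obtain ⟨r, t, hrt⟩ := exists_eq_prime_mul_sq_of_mul_eq hp hm hn hmn h hpm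
    exact ⟨r, t, .inl hrt⟩
  · obtain ⟨r, t, hrt⟩ :=
      exists_eq_prime_mul_sq_of_mul_eq hp hn hm hmn.symm (mul_comm n m ▸ h) hpn
    exact ⟨r, t, .inr hrt⟩

theorem sq_add_ne_mul_sq_of_not_isSquare {c : ℤ} (hc : ¬IsSquare (-c : ZMod p)) (t r : ℤ) :
    t ^ 2 + c ≠ p * r ^ 2 := by
  intro h
  have hzmod : (t : ZMod p) ^ 2 + c = 0 := by
    simpa using congrArg (Int.cast : ℤ → ZMod p) h
  exact hc ⟨t, by linear_combination -hzmod⟩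

theorem even_x_of_isFundamental (hp : p.Prime) (hmod : p % 4 = 3) {S : Pell.Solution₁ (p : ℤ)}
    (hS : Pell.IsFundamental S) : Even S.x := by
  have : Fact p.Prime := ⟨hp⟩
  by_contra hodd
  obtain ⟨m, hm⟩ := Int.not_even_iff_odd.1 hodd
  have hm0 : 0 < m := by linarith [hS.1]
  have hprop := S.prop
  obtain ⟨n, hn⟩ : (2 : ℤ) ∣ S.y := by
    have hdvd : (2 : ℤ) ∣ p * S.y ^ 2 := ⟨2 * (m * (m + 1)), by rw [hm] at hprop; linarith⟩
    exact Int.prime_two.dvd_of_dvd_pow ((Int.prime_two.dvd_or_dvd hdvd).resolve_left (by lia))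
  have hmul : m * (m + 1) = p * n ^ 2 := by
    rw [hm, hn] at hprop
    linarith
  obtain ⟨r, t, ⟨hpr, ht⟩ | ⟨hpr, ht⟩⟩ := exists_eq_prime_mul_sq_or_of_mul_eq hp hm0.le
    (by linarith) ⟨-1, 1, by ring⟩ hmul
  · have ht1 : 1 < |t| := (one_lt_sq_iff_one_lt_abs t).1 (by linarith)
    have hle : S.x ≤ |t| :=
      hS.x_le_x (a := Pell.Solution₁.mk |t| r (by rw [sq_abs]; linarith)) ht1
    have hlt : |t| ≤ t ^ 2 := by
      rw [← sq_abs]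
      exact le_self_pow₀ ht1.le two_ne_zero
    linarith
  · refine sq_add_ne_mul_sq_of_not_isSquare (c := 1) ?_ t r (by rw [← ht, hpr])
    simpa [ZMod.exists_sq_eq_neg_one_iff] using hmod

theorem exists_sq_sub_mul_sq_eq_two (hp : p.Prime) (hmod : p % 8 = 7) :
    ∃ a b : ℤ, a ^ 2 - p * b ^ 2 = 2 := by
  have : Fact p.Prime := ⟨hp⟩
  obtain ⟨S, hS⟩ := Pell.IsFundamental.exists_of_not_isSquare (by exact_mod_cast hp.pos)
    (Nat.prime_iff_prime_int.1 hp).not_isSquare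
  obtain ⟨m, hm⟩ := even_x_of_isFundamental hp (by lia) hS
  have hx := hS.1
  obtain ⟨r, t, ⟨hpr, ht⟩ | ⟨hpr, ht⟩⟩ := exists_eq_prime_mul_sq_or_of_mul_eq (m := S.x - 1)
    (n := S.x + 1) hp (by linarith) (by linarith) ⟨m, 1 - m, by rw [hm]; ring⟩
    (show _ = p * S.y ^ 2 by linarith [S.prop])
  · exact ⟨t, r, by linarith⟩
  · refine absurd (show t ^ 2 + 2 = p * r ^ 2 by linarith)
      (sq_add_ne_mul_sq_of_not_isSquare ?_ t r)
    simp only [Int.cast_ofNat, ZMod.exists_sq_eq_neg_two_iff (p := p) (by lia : p ≠ 2)]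
    lia

theorem exists_sq_sub_mul_sq_eq_two_and_modEq (hp : p.Prime) (hmod : p % 8 = 7) :
    ∃ a b : ℤ, a ^ 2 - p * b ^ 2 = 2 ∧ a ^ 2 ≡ 1 [ZMOD 4] ∧ p * (a * b) ≡ 1 [ZMOD 4] := by
  obtain ⟨a, b, hab⟩ := exists_sq_sub_mul_sq_eq_two hp hmod
  have hp4 : (p : ℤ) ≡ 3 [ZMOD 4] := by
    unfold Int.ModEq
    lia
  have hparity : Even a ↔ Even b := by
    have heven : Even (a ^ 2 - p * b ^ 2) := hab ▸ even_two
    have hp2 : ¬Even p := by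
      rw [Nat.even_iff]
      lia
    simpa [hp2, Int.even_sub, Int.even_mul, Int.even_pow] using heven
  have hb : Odd b := by
    rw [← Int.not_even_iff_odd]
    intro hb
    obtain ⟨c, rfl⟩ := (hparity.2 hb).two_dvd
    obtain ⟨d, rfl⟩ := hb.two_dvd
    have h4 : 4 * (c ^ 2 - p * d ^ 2) = 2 := by linear_combination hab
    exact absurd (Dvd.intro _ h4) (by decide)
  have ha : Odd a := Int.not_even_iff_odd.1 (mt hparity.1 (Int.not_even_iff_odd.2 hb))
  have hmul : a * b ≡ 3 [ZMOD 4] ∨ a * -b ≡ 3 [ZMOD 4] := by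
    have := Int.odd_iff.1 (ha.mul hb)
    unfold Int.ModEq
    rw [mul_neg]
    lia
  have ha4 : a ^ 2 ≡ 1 [ZMOD 4] := Int.sq_mod_four_eq_one_of_odd ha
  rcases hmul with h | h
  · exact ⟨a, b, hab, ha4, hp4.mul h⟩
  · exact ⟨a, -b, by rw [neg_sq, hab], ha4, hp4.mul h⟩

theorem sq_add_one_ne_mul_sq_rat (hp : p.Prime) (hmod : p % 4 = 3) (r t : ℚ) :
    r ^ 2 + 1 ≠ p * t ^ 2 := by
  have : Fact p.Prime := ⟨hp⟩
  intro h
  set m := (r.num * t.den).natAbs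
  set n := r.den * t.den
  set l := (t.num * r.den).natAbs
  have hmnl : p * l ^ 2 = m ^ 2 + n ^ 2 := by
    have hQ : (p : ℚ) * (t.num * r.den) ^ 2 = (r.num * t.den) ^ 2 + (r.den * t.den) ^ 2 := by
      rw [← Rat.mul_den_eq_num r, ← Rat.mul_den_eq_num t]
      linear_combination -(r.den : ℚ) ^ 2 * (t.den : ℚ) ^ 2 * h
    zify
    simp only [m, n, l, Int.natCast_natAbs, sq_abs]
    exact_mod_cast hQ
  have hl : l ≠ 0 := by
    intro hl
    have hn : 0 < n ^ 2 := pow_pos (Nat.mul_pos r.den_pos t.den_pos) 2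
    rw [hl] at hmnl
    lia
  have heven : Even (padicValNat p (p * l ^ 2)) :=
    Nat.eq_sq_add_sq_iff.1 ⟨m, n, hmnl⟩ p (by simp [hp, hl, hp.ne_zero]) hmod
  rw [padicValNat.mul hp.ne_zero (pow_ne_zero 2 hl), padicValNat_self, padicValNat.pow] at heven
  rw [Nat.even_iff] at heven
  lia

end Pell

section SignedAction

variable {B G : Type*} [CommRing B] [Group G] [MulSemiringAction G B]

theorem smul_sub_smul_eq_neg (hG : Nat.card G = 2) (σ : G) (x : B) :
    σ • (x - σ • x) = -(x - σ • x) := by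
  rw [smul_sub, smul_smul, mul_self_eq_one_of_card_eq_two hG, one_smul, neg_sub]

theorem smul_eq_or_eq_neg_of_mem_powers {σ : G} {d : B} (hd : σ • d = -d) {g : B}
    (hg : g ∈ Submonoid.powers d) : σ • g = g ∨ σ • g = -g := by
  obtain ⟨n, rfl⟩ := hg
  rw [smul_pow', hd]
  rcases neg_one_pow_eq_or B n with h | h
  · exact .inl (by rw [neg_pow, h, one_mul])
  · exact .inr (by rw [neg_pow, h, neg_one_mul])

end SignedAction

theorem exists_unit_of_sq_sub_sq_eq_two {R : Type*} [CommRing R] {a c : R}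
    (h : a ^ 2 - c ^ 2 = 2) :
    ∃ ε : Rˣ, (ε : R) = a ^ 2 - 1 + a * c ∧ (a + c) ^ 2 = 2 * ε := by
  refine ⟨⟨a ^ 2 - 1 + a * c, a ^ 2 - 1 - a * c, ?_, ?_⟩, rfl, ?_⟩
  · linear_combination a ^ 2 * h
  · linear_combination a ^ 2 * h
  · linear_combination -h

section RamifiedPrimes

variable {A B G : Type*} [CommRing A] [CommRing B] [IsDedekindDomain A] [IsDedekindDomain B]
  [Algebra A B] [Module.Finite A B] [Module.IsTorsionFree A B]
  [Group G] [MulSemiringAction G B] [IsGaloisGroup G A B]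

theorem ramifiedPrimesGeneratedBy_powers_sub_smul [PerfectField (FractionRing A)]
    (hG : Nat.card G = 2) (σ : G) {π : A} (hπ : Prime π) {x : B}
    (hx : Associated (algebraMap A B π) ((x - σ • x) ^ 2)) :
    RamifiedPrimesGeneratedBy A (Submonoid.powers (x - σ • x)) := by
  intro Q _ hQ0 hQ
  have hmem : x - σ • x ∈ Q := sub_smul_mem_of_map_under_eq_sq hG hQ0 hQ σ x
  have hπQ : π ∈ Q.under A :=
    (Ideal.mem_iff_of_associated hx).2 (Ideal.pow_mem_of_mem _ hmem 2 two_pos)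
  exact ⟨_, Submonoid.mem_powers _, eq_span_singleton_of_map_under_eq_sq hQ hπ hπQ hx⟩

theorem ramifiedPrimesGeneratedBy_top_of_sq_eq_prime {p : ℕ} (hp : p.Prime)
    (hmod : p % 8 = 7) [Module.Finite ℤ B] [Module.IsTorsionFree ℤ B] [IsGaloisGroup G ℤ B]
    (hG : Nat.card G = 2) {σ : G} {W : B} (hW : W ^ 2 = p) (hσ : σ • W = -W) :
    RamifiedPrimesGeneratedBy ℤ (⊤ : Submonoid B) := by
  intro Q _ hQ0 hQ
  have hmem : W - σ • W ∈ Q := sub_smul_mem_of_map_under_eq_sq hG hQ0 hQ σ W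
  have hunder : 2 ^ 2 * (p : ℤ) ∈ Q.under ℤ := by
    rw [Ideal.under, Ideal.mem_comap]
    convert Ideal.pow_mem_of_mem _ hmem 2 two_pos using 1
    rw [hσ, sub_neg_eq_add, ← two_mul, mul_pow, hW]
    norm_num
  rcases Ideal.IsPrime.mem_or_mem inferInstance hunder with h2 | hpQ
  · obtain ⟨a, b, hab⟩ := exists_sq_sub_mul_sq_eq_two hp hmod
    obtain ⟨ε, -, hε⟩ := exists_unit_of_sq_sub_sq_eq_two (a := (a : B)) (c := b * W) (by
      have habB := congrArg (Int.cast : ℤ → B) hab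
      push_cast at habB
      linear_combination habB - b ^ 2 * hW)
    exact ⟨a + b * W, trivial, eq_span_singleton_of_map_under_eq_sq hQ Int.prime_two
      (Ideal.IsPrime.mem_of_pow_mem inferInstance 2 h2) ⟨ε, by simp [hε]⟩⟩
  · exact ⟨W, trivial, eq_span_singleton_of_map_under_eq_sq hQ (Nat.prime_iff_prime_int.1 hp) hpQ
      (by simp [hW])⟩

end RamifiedPrimes

section QuadraticExtension

variable {F M : Type*} [Field F] [Field M] [Algebra F M] [Algebra.IsQuadraticExtension F M]
  [CharZero F]

variable (F M) in
theorem card_aut_eq_two : Nat.card Gal(M/F) = 2 := by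
  rw [IsGalois.card_aut_eq_finrank, Algebra.IsQuadraticExtension.finrank_eq_two]

variable (F M) in
theorem exists_aut_ne_one : ∃ σ : Gal(M/F), σ ≠ 1 := by
  have : Nontrivial Gal(M/F) :=
    Finite.one_lt_card_iff_nontrivial.1 ((card_aut_eq_two F M).symm ▸ one_lt_two)
  exact exists_ne 1

theorem mem_range_algebraMap_of_apply_eq {σ : Gal(M/F)} (hσ : σ ≠ 1) {x : M} (hx : σ x = x) :
    x ∈ Set.range (algebraMap F M) := by
  refine (IsGalois.mem_range_algebraMap_iff_fixed x).2 fun τ => ?_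
  rcases eq_one_or_eq_of_card_eq_two (card_aut_eq_two F M) hσ τ with rfl | rfl
  · rfl
  · exact hx

theorem apply_apply_of_isQuadraticExtension (σ : Gal(M/F)) (x : M) : σ (σ x) = x :=
  DFunLike.congr_fun (mul_self_eq_one_of_card_eq_two (card_aut_eq_two F M)) x

theorem apply_eq_neg_of_sq_eq {σ : Gal(M/F)} (hσ : σ ≠ 1) {w : M} {c : F}
    (hw : w ^ 2 = algebraMap F M c) (hc : ¬IsSquare c) : σ w = -w := by
  have hsq : σ w ^ 2 = w ^ 2 := by rw [← map_pow, hw, AlgEquiv.commutes]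
  refine (sq_eq_sq_iff_eq_or_eq_neg.1 hsq).resolve_left fun hfix => hc ?_
  obtain ⟨r, rfl⟩ := mem_range_algebraMap_of_apply_eq hσ hfix
  exact ⟨r, (algebraMap F M).injective (by rw [← hw, sq, map_mul])⟩

theorem exists_mul_apply_eq_sq_sub_mul_sq {σ : Gal(M/F)} (hσ : σ ≠ 1) {w : M} {c : F}
    (hw : w ^ 2 = algebraMap F M c) (hc : ¬IsSquare c) (z : M) :
    ∃ r t : F, z * σ z = algebraMap F M (r ^ 2 - c * t ^ 2) := by
  have : CharZero M := charZero_of_injective_algebraMap (algebraMap F M).injective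
  have hσw := apply_eq_neg_of_sq_eq hσ hw hc
  have hσσ := apply_apply_of_isQuadraticExtension σ z
  have hw0 : w ≠ 0 := by
    rintro rfl
    refine hc ⟨0, (algebraMap F M).injective ?_⟩
    simp [← hw]
  obtain ⟨r, hr⟩ := mem_range_algebraMap_of_apply_eq hσ (x := (z + σ z) / 2) (by
    rw [map_div₀, map_add, hσσ, map_ofNat, add_comm])
  obtain ⟨t, ht⟩ := mem_range_algebraMap_of_apply_eq hσ (x := (z - σ z) / (2 * w)) (by
    rw [map_div₀, map_sub, hσσ, map_mul, map_ofNat, hσw]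
    field_simp
    ring)
  refine ⟨r, t, ?_⟩
  rw [map_sub, map_mul, map_pow, map_pow, hr, ht, ← hw]
  field_simp
  ring

end QuadraticExtension

section NumberField

theorem rank_lt_finrank (k : Type*) [Field k] [NumberField k] :
    Units.rank k < Module.finrank ℚ k := by
  have hcard := InfinitePlace.card_add_two_mul_card_eq_rank k
  have hplaces := InfinitePlace.card_eq_nrRealPlaces_add_nrComplexPlaces k
  have hpos := Module.finrank_pos (R := ℚ) (M := k)
  rw [Units.rank, hplaces]
  lia

theorem finrank_le_two_mul_rank_add_one {L : Type*} [Field L] [NumberField L] (ψ : L →+* ℝ) :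
    Module.finrank ℚ L ≤ 2 * Units.rank L + 1 := by
  classical
  have hcard := InfinitePlace.card_add_two_mul_card_eq_rank L
  have hplaces := InfinitePlace.card_eq_nrRealPlaces_add_nrComplexPlaces L
  have hreal : ComplexEmbedding.IsReal (Complex.ofRealHom.comp ψ) :=
    ComplexEmbedding.isReal_iff.2 (RingHom.ext fun x => Complex.conj_ofReal _)
  have : Nonempty {v : InfinitePlace L // v.IsReal} := ⟨⟨.mk _, ⟨_, hreal, rfl⟩⟩⟩
  have hpos : 0 < InfinitePlace.nrRealPlaces L := Fintype.card_pos
  rw [Units.rank, hplaces]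
  lia

theorem prime_of_sq_eq_prime {k : Type*} [Field k] [NumberField k]
    [Algebra.IsQuadraticExtension ℚ k] {p : ℕ} (hp : p.Prime) {W : 𝓞 k} (hW : W ^ 2 = p) :
    Prime W := by
  have hW0 : W ≠ 0 := by
    rintro rfl
    simp [hp.ne_zero, eq_comm] at hW
  rw [← Ideal.span_singleton_prime hW0]
  refine Ideal.isPrime_of_irreducible_absNorm ?_
  have hnorm : Ideal.absNorm (Ideal.span {W}) ^ 2 = p ^ 2 := by
    rw [← map_pow, Ideal.span_singleton_pow, hW, Ideal.absNorm_span_natCast, RingOfIntegers.rank,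
      Algebra.IsQuadraticExtension.finrank_eq_two]
  rw [Nat.pow_left_injective two_ne_zero hnorm]
  exact hp

theorem odd_classNumber_of_sq_eq_prime {k : Type*} [Field k] [NumberField k]
    [Algebra.IsQuadraticExtension ℚ k] {p : ℕ} (hp : p.Prime) (hmod : p % 8 = 7) {W : 𝓞 k}
    (hW : W ^ 2 = p) : Odd (classNumber k) := by
  obtain ⟨σ, hσ⟩ := exists_aut_ne_one ℚ k
  have hG := card_aut_eq_two ℚ k
  have hw : (W : k) ^ 2 = algebraMap ℚ k p := by
    rw [← map_pow, hW, map_natCast, map_natCast]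
  have hp2 : ¬IsSquare (p : ℚ) := by
    rw [Rat.isSquare_natCast_iff]
    exact hp.prime.not_isSquare
  have hσW : σ • W = -W := RingOfIntegers.ext (apply_eq_neg_of_sq_eq hσ hw hp2)
  refine odd_card_classGroup_of_intNorm (A := ℤ) hG hσ (by simp [card_classGroup_eq_one])
    (ramifiedPrimesGeneratedBy_top_of_sq_eq_prime hp hmod hG hW hσW) fun u x y hx hxy => ?_
  rcases Int.units_eq_one_or u with rfl | rfl
  · exact one_mem _
  · exfalso
    have hx0 : (x : k) ≠ 0 := RingOfIntegers.coe_ne_zero_iff.2 hx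
    have hσx0 : σ (x : k) ≠ 0 := by simpa using hx0
    have hnorm : (y : k) * σ y = -(x * σ x) := by
      have hB := congrArg (algebraMap ℤ (𝓞 k)) hxy
      rw [map_mul, algebraMap_intNorm_eq_mul_smul ℤ hG hσ,
        algebraMap_intNorm_eq_mul_smul ℤ hG hσ] at hB
      have hO : y * σ • y = -(x * σ • x) := by simpa using hB
      exact congrArg (algebraMap (𝓞 k) k) hO
    obtain ⟨r, t, hrt⟩ := exists_mul_apply_eq_sq_sub_mul_sq hσ hw hp2 (y / x : k)
    have hneg : algebraMap ℚ k (r ^ 2 - p * t ^ 2) = algebraMap ℚ k (-1) := by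
      rw [← hrt, map_div₀, div_mul_div_comm, hnorm, neg_div, div_self (mul_ne_zero hx0 hσx0),
        map_neg, map_one]
    refine sq_add_one_ne_mul_sq_rat hp (by lia) r t ?_
    linear_combination (algebraMap ℚ k).injective hneg

variable {F M : Type*} [Field F] [NumberField F] [Field M] [NumberField M] [Algebra F M]
  [Algebra.IsQuadraticExtension F M] {σ : Gal(M/F)}

theorem coe_intNorm_eq_mul_apply (hσ : σ ≠ 1) (x : 𝓞 M) :
    algebraMap F M (Algebra.intNorm (𝓞 F) (𝓞 M) x : 𝓞 F) = x * σ x :=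
  congrArg (algebraMap (𝓞 M) M)
    (algebraMap_intNorm_eq_mul_smul (𝓞 F) (card_aut_eq_two F M) hσ x)

theorem exists_forall_intNorm_pos (hσ : σ ≠ 1) {φ : M →+* ℂ}
    (hφ : ComplexEmbedding.conjugate φ = φ.comp σ) :
    ∃ ψ : F →+* ℝ, ∀ x : 𝓞 M, x ≠ 0 → 0 < ψ (Algebra.intNorm (𝓞 F) (𝓞 M) x : 𝓞 F) := by
  have hconj (x : M) : starRingEnd ℂ (φ x) = φ (σ x) := DFunLike.congr_fun hφ x
  have hreal : ComplexEmbedding.IsReal (φ.comp (algebraMap F M)) := by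
    rw [ComplexEmbedding.isReal_iff]
    ext x
    simp [hconj]
  refine ⟨hreal.embedding, fun x hx => ?_⟩
  have hnormSq : hreal.embedding (Algebra.intNorm (𝓞 F) (𝓞 M) x : 𝓞 F) =
      Complex.normSq (φ x) := by
    apply Complex.ofReal_injective
    rw [hreal.coe_embedding_apply, RingHom.comp_apply, coe_intNorm_eq_mul_apply hσ, map_mul,
      ← hconj, Complex.mul_conj]
  rw [hnormSq, Complex.normSq_pos]
  simpa using hx

theorem odd_classNumber_of_isQuadraticExtension (hσ : σ ≠ 1) (hF : Odd (classNumber F))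
    {π : 𝓞 F} (hπ : Prime π) {x : 𝓞 M}
    (hx : Associated (algebraMap (𝓞 F) (𝓞 M) π) ((x - σ • x) ^ 2)) {φ : M →+* ℂ}
    (hφ : ComplexEmbedding.conjugate φ = φ.comp σ) (hrankF : Units.rank F ≤ 1)
    (hrank : Units.rank F < Units.rank M) : Odd (classNumber M) := by
  have hG := card_aut_eq_two F M
  obtain ⟨ψ, hψ⟩ := exists_forall_intNorm_pos hσ hφ
  have hψinj : Function.Injective (ψ.comp (algebraMap (𝓞 F) F)) :=
    ψ.injective.comp RingOfIntegers.coe_injective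
  simp only [← Units.finrank_eq] at hrankF hrank
  exact odd_card_classGroup_of_forall_intNorm_pos hG hσ hF
    (ramifiedPrimesGeneratedBy_powers_sub_smul hG σ hπ hx)
    (fun _ => smul_eq_or_eq_neg_of_mem_powers (smul_sub_smul_eq_neg hG σ x)) hψinj hψ hrankF hrank

end NumberField

theorem isIntegral_of_sq_sub_self {R S : Type*} [CommRing R] [Nontrivial R] [CommRing S]
    [Algebra R S] {x : S} (hx : IsIntegral R (x ^ 2 - x)) : IsIntegral R x := by
  have hmonic : (X ^ 2 - X : R[X]).Monic := by monicity!
  have hdeg : (X ^ 2 - X : R[X]).natDegree = 2 := by compute_degree!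
  exact .of_aeval_monic hmonic (hdeg.trans_ne two_ne_zero) (by
    simpa only [map_sub, map_pow, aeval_X] using hx)

theorem sqrt_two_mul_sqrt_pow_four {x : ℝ} (hx : 0 ≤ x) : √(2 * √x) ^ 4 = 4 * x := by
  calc √(2 * √x) ^ 4 = (√(2 * √x) ^ 2) ^ 2 := by rw [← pow_mul]
    _ = 2 ^ 2 * √x ^ 2 := by rw [Real.sq_sqrt (by positivity), mul_pow]
    _ = 4 * x := by rw [Real.sq_sqrt hx]; norm_num

theorem exists_unit_two_mul_eq_sq_and_mul_eq_four_mul_add_one {R : Type*} [CommRing R] {p : ℕ}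
    (hp : p.Prime) (hmod : p % 8 = 7) {W : R} (hW : W ^ 2 = p) :
    ∃ (ε : Rˣ) (s c : R), s ^ 2 = 2 * ε ∧ W * ε = 4 * c + 1 := by
  obtain ⟨a, b, hab, ha, hpab⟩ := exists_sq_sub_mul_sq_eq_two_and_modEq hp hmod
  obtain ⟨m, hm⟩ := ha.symm.dvd
  obtain ⟨n, hn⟩ := hpab.symm.dvd
  replace hab := congrArg (Int.cast : ℤ → R) hab
  replace hm := congrArg (Int.cast : ℤ → R) hm
  replace hn := congrArg (Int.cast : ℤ → R) hn
  push_cast at hab hm hn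
  obtain ⟨ε, hε, hεsq⟩ := exists_unit_of_sq_sub_sq_eq_two (a := (a : R)) (c := b * W)
    (by linear_combination hab - b ^ 2 * hW)
  exact ⟨ε, a + b * W, m * W + n, hεsq,
    by linear_combination hε * W + hm * W + hn + a * b * hW⟩

section PowerBasis

variable {L : Type*} [Field L] [CharZero L] (pb : PowerBasis ℚ L)

theorem apply_gen_eq_neg {k : Type*} [Field k] [CharZero k] [Algebra k L] {σ : Gal(L/k)}
    (hσ : σ ≠ 1) {c : k} (hc : pb.gen ^ 2 = algebraMap k L c) : σ pb.gen = -pb.gen := by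
  have hsq : σ pb.gen ^ 2 = pb.gen ^ 2 := by rw [← map_pow, hc, AlgEquiv.commutes]
  refine (sq_eq_sq_iff_eq_or_eq_neg.1 hsq).resolve_left fun hfix => hσ ?_
  have hid : (σ : L →ₐ[k] L).restrictScalars ℚ = AlgHom.id ℚ L := pb.algHom_ext hfix
  exact AlgEquiv.ext fun x => DFunLike.congr_fun hid x

theorem conjugate_eq_comp_of_conj_gen {σ : L →+* L} (hσ : σ pb.gen = -pb.gen) {φ : L →+* ℂ}
    (hφ : starRingEnd ℂ (φ pb.gen) = -φ pb.gen) : ComplexEmbedding.conjugate φ = φ.comp σ := by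
  have hext : (ComplexEmbedding.conjugate φ).toRatAlgHom = (φ.comp σ).toRatAlgHom :=
    pb.algHom_ext (by simp [hσ, hφ])
  exact RingHom.ext fun x => DFunLike.congr_fun hext x

end PowerBasis

section Tower

variable {p : ℕ} {k L : Type*} [Field k] [Field L] [Algebra k L]

theorem exists_associated_sub_smul_sq [CharZero L] (hp : p.Prime) (hmod : p % 8 = 7) {W : 𝓞 k}
    (hW : W ^ 2 = p) {σ : Gal(L/k)} {θ : L} (hθ : θ ^ 2 = 2 * algebraMap k L W) (hσ : σ θ = -θ) :
    ∃ x : 𝓞 L, Associated (algebraMap (𝓞 k) (𝓞 L) W) ((x - σ • x) ^ 2) := by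
  obtain ⟨ε, s, c, hs, hc⟩ := exists_unit_two_mul_eq_sq_and_mul_eq_four_mul_add_one hp hmod hW
  let ι : 𝓞 k →+* L := (algebraMap k L).comp (algebraMap (𝓞 k) k)
  set t : L := ι s * θ / 2 with ht
  have htsq : t ^ 2 = ι (W * ε) := by
    have hsι := congrArg ι hs
    have hθι : θ ^ 2 = 2 * ι W := hθ
    simp only [map_pow, map_mul, map_ofNat] at hsι ⊢
    linear_combination θ ^ 2 / 4 * hsι + ι ε / 2 * hθι
  have hint : IsIntegral ℤ ((1 + t) / 2) := by
    refine isIntegral_of_sq_sub_self ?_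
    have hsub : ((1 + t) / 2) ^ 2 - (1 + t) / 2 = ι c := by
      have hcι := congrArg ι hc
      simp only [map_add, map_mul, map_ofNat, map_one] at hcι htsq
      linear_combination htsq / 4 + hcι / 4
    rw [hsub]
    exact (RingOfIntegers.isIntegral_coe c).algebraMap
  have hσt : (1 + t) / 2 - σ ((1 + t) / 2) = t := by
    rw [map_div₀, map_add, map_one, map_ofNat, ht, map_div₀, map_mul, hσ, map_ofNat,
      RingHom.comp_apply, AlgEquiv.commutes]
    ring
  have hdiff : ι (W * ε) = ((1 + t) / 2 - σ ((1 + t) / 2)) ^ 2 := by rw [hσt, htsq]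
  have hmul : algebraMap (𝓞 k) (𝓞 L) W * algebraMap (𝓞 k) (𝓞 L) ε =
      algebraMap (𝓞 k) (𝓞 L) (W * ε) := (map_mul _ _ _).symm
  exact ⟨⟨(1 + t) / 2, hint⟩, Units.map (algebraMap (𝓞 k) (𝓞 L) : 𝓞 k →* 𝓞 L) ε,
    RingOfIntegers.ext ((congrArg (algebraMap (𝓞 L) L) hmul).trans hdiff)⟩

theorem odd_classNumber_of_quartic_tower [NumberField k] [NumberField L]
    [Algebra.IsQuadraticExtension ℚ k] [Algebra.IsQuadraticExtension k L] (hp : p.Prime)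
    (hmod : p % 8 = 7) {W : 𝓞 k} (hW : W ^ 2 = p) (pb : PowerBasis ℚ L)
    (hpb : minpoly ℚ pb.gen = X ^ 4 - C (4 * p : ℚ))
    (hθ : pb.gen ^ 2 = 2 * algebraMap k L W) : Odd (classNumber L) := by
  obtain ⟨σ, hσ⟩ := exists_aut_ne_one k L
  have hσθ : σ pb.gen = -pb.gen :=
    apply_gen_eq_neg pb hσ (c := 2 * W) (by rw [hθ, map_mul, map_ofNat])
  obtain ⟨x, hx⟩ := exists_associated_sub_smul_sq hp hmod hW hθ hσθ
  have hr := sqrt_two_mul_sqrt_pow_four p.cast_nonneg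
  set r := √(2 * √p)
  let ψ : L →ₐ[ℚ] ℝ := pb.lift r (by simp [hpb, hr])
  let φ : L →ₐ[ℚ] ℂ := pb.lift (Complex.I * r) (by
    simp [hpb, mul_pow, ← Complex.ofReal_pow, hr])
  have hφ : ComplexEmbedding.conjugate (φ : L →+* ℂ) = (φ : L →+* ℂ).comp (σ : L →+* L) :=
    conjugate_eq_comp_of_conj_gen pb hσθ (by simp [φ])
  have hrankk : Units.rank k < 2 :=
    (rank_lt_finrank k).trans_eq (Algebra.IsQuadraticExtension.finrank_eq_two ℚ k)
  have hrankL : 4 ≤ 2 * Units.rank L + 1 := by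
    rw [← natDegree_X_pow_sub_C (n := 4) (r := (4 * p : ℚ)), ← hpb, pb.natDegree_minpoly,
      ← pb.finrank]
    exact finrank_le_two_mul_rank_add_one ψ
  exact odd_classNumber_of_isQuadraticExtension hσ (odd_classNumber_of_sq_eq_prime hp hmod hW)
    (prime_of_sq_eq_prime hp hW) hx hφ (by lia) (by lia)

end Tower

theorem finrank_adjoin_simple_of_sq_eq {F E : Type*} [Field F] [Field E] [Algebra F E] {x : E}
    {c : F} (hx : x ^ 2 = algebraMap F E c) (hc : ¬IsSquare c) :
    Module.finrank F (IntermediateField.adjoin F {x}) = 2 := by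
  have hmonic : (X ^ 2 - C c).Monic := monic_X_pow_sub_C c two_ne_zero
  have hirr : Irreducible (X ^ 2 - C c) :=
    X_pow_sub_C_irreducible_of_prime Nat.prime_two fun b hb => hc ⟨b, by rw [← hb, sq]⟩
  have hroot : aeval x (X ^ 2 - C c) = 0 := by simp [hx]
  rw [IntermediateField.adjoin.finrank ⟨_, hmonic, hroot⟩,
    ← minpoly.eq_of_irreducible_of_monic hirr hroot hmonic, natDegree_X_pow_sub_C]

theorem exists_powerBasis_minpoly_eq {F E : Type*} [Field F] [Field E] [Algebra F E] {f : F[X]}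
    (hf : f.Monic) (e : E ≃ₐ[F] AdjoinRoot f) : ∃ pb : PowerBasis F E, minpoly F pb.gen = f := by
  refine ⟨(AdjoinRoot.powerBasis hf.ne_zero).map e.symm, ?_⟩
  rw [PowerBasis.map_gen, minpoly.algEquiv_eq, AdjoinRoot.minpoly_powerBasis_gen_of_monic hf]

theorem classNumber_sqrt_two_sqrt_p_odd_general
    (p : ℕ) (hp : p.Prime) (hmod : p % 8 = 7)
    (K' : Type*) [Field K'] [NumberField K']
    (hK' : Nonempty (K' ≃ₐ[ℚ] AdjoinRoot (X ^ 4 - C (4 * p : ℚ)))) :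
    Odd (classNumber K') := by
  obtain ⟨pb, hpb⟩ := exists_powerBasis_minpoly_eq (monic_X_pow_sub_C _ four_ne_zero) hK'.some
  have hθ : pb.gen ^ 4 = 4 * p := by
    simpa [hpb, sub_eq_zero] using minpoly.aeval ℚ pb.gen
  have hdeg : Module.finrank ℚ K' = 4 := by
    rw [pb.finrank, ← pb.natDegree_minpoly, hpb, natDegree_X_pow_sub_C]
  set y : K' := pb.gen ^ 2 / 2 with hy
  have hy2 : y ^ 2 = p := by linear_combination hθ / 4
  let k := IntermediateField.adjoin ℚ {y}
  let w : k := IntermediateField.AdjoinSimple.gen ℚ y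
  have hw : w ^ 2 = p := Subtype.ext hy2
  have hk : Module.finrank ℚ k = 2 := finrank_adjoin_simple_of_sq_eq (c := (p : ℚ)) (by simp [hy2])
    (Rat.isSquare_natCast_iff.not.2 hp.prime.not_isSquare)
  have hkK : Module.finrank k K' = 2 := by
    have := Module.finrank_mul_finrank ℚ k K'
    lia
  have : Algebra.IsQuadraticExtension ℚ k := ⟨hk⟩
  have : Algebra.IsQuadraticExtension k K' := ⟨hkK⟩
  have hint : IsIntegral ℤ w := .of_pow two_pos (hw ▸ isIntegral_natCast p)
  exact odd_classNumber_of_quartic_tower (W := ⟨w, hint⟩) hp hmod (RingOfIntegers.ext hw) pb hpb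
    (show pb.gen ^ 2 = 2 * y by linear_combination -2 * hy)

/-- For a prime `p ≡ -1 (mod 16)`, the class number of the quartic
field `K' = ℚ(√(2√p)) = ℚ[x]/(x⁴ - 4p)` is odd. -/
theorem classNumber_sqrt_two_sqrt_p_odd
    (p : ℕ) (hp : p.Prime) (hmod : p % 16 = 15)
    (K' : Type*) [Field K'] [NumberField K']
    (hK' : Nonempty (K' ≃ₐ[ℚ] AdjoinRoot (X ^ 4 - C (4 * p : ℚ)))) :
    Odd (classNumber K') :=
  classNumber_sqrt_two_sqrt_p_odd_general p hp (by lia) K' hK'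
end

section
/- Let p ≡ −1 (mod 16) be a prime, K' = ℚ(√(2√p)) ⊂ ℝ, k = ℚ(√p) its quadratic subfield, and σ the nontrivial automorphism of K' fixing k. Then there exists a totally positive unit ξ of the ring of integers of K' such that the unit group of the ring of integers of K' is generated by −1, ξ, and σ(ξ), and such that the relative norm ξ·σ(ξ) is the fundamental unit of k. -/
open NumberField IntermediateField

/-!
Let `p ≡ 7 (mod 8)`, let `ε > 1` be the fundamental unit of the Dedekind domain `ℤ√p`, and let
`E` be the group of positive units of `K'`. By Hilbert 90 the ideals of `ℤ√p` with principal square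
are principal, and `2ε = π²` for some `π` in `ℤ√p`; since `π` has norm `2`, it also follows that
`ε√p` is congruent to an odd integer modulo `8`.

Let `u ∈ E` have trace `t` and relative norm `n` over `k`. The discriminant `t² - 4n` has the form
`ε√p β²`, so its conjugate is nonpositive and `n` is totally positive, that is, a power of `ε`. If
`n = 1`, then `(t + 2)(t - 2) = ε√p β²` with `t + 2` totally positive, and after removing common
factors `2` by the congruence above, `t + 2` is a unit times a square. As
`(t + 2) u = (1 + u)²`, this makes `u εʲ` a square in `E` for some `j`.

The units of relative norm `1` in `E` form a nontrivial cyclic group, generated by some `η`, and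
`η εʲ = w²` with `w ∈ E`. Were `j` even, `w ε^(-j/2)` would be a square root of `η` of relative norm
`1`. So `j` is odd, and some `ξ ∈ E` satisfies `ξ² = ηε` and `ξ · σ ξ = ε`. Hence `η = ξ / σ ξ`, and
every element of `E` is a power of `ξ` times a power of `η`.
-/

section IntegersOfQuadraticFields

variable {d : ℤ}

theorem exists_eq_intCast_of_mul_sq_eq_intCast (hd : Squarefree d) {q : ℚ} {n : ℤ}
    (h : d * q ^ 2 = n) : ∃ m : ℤ, q = m := by
  have hd0 : (d : ℚ) ≠ 0 := Int.cast_ne_zero.mpr hd.ne_zero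
  have hsq : (d * q) ^ 2 = ((d * n : ℤ) : ℚ) := by push_cast; rw [← h]; ring
  obtain ⟨g, hg⟩ : ∃ g : ℤ, (g : ℚ) = d * q := IsIntegrallyClosed.isIntegral_iff.mp
    (IsIntegral.of_pow two_pos (by rw [hsq]; exact isIntegral_algebraMap))
  obtain ⟨m, rfl⟩ : d ∣ g := by
    rw [← hd.dvd_pow_iff_dvd two_ne_zero]
    exact ⟨n, by rw [← hg] at hsq; exact_mod_cast hsq⟩
  exact ⟨m, mul_left_cancel₀ hd0 (by rw [← hg]; push_cast; rfl)⟩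

theorem two_dvd_of_four_dvd_sq_sub_mul_sq (hd : Squarefree d) (h4 : d % 4 ≠ 1) {x y : ℤ}
    (h : 4 ∣ x ^ 2 - d * y ^ 2) : 2 ∣ x ∧ 2 ∣ y := by
  have hd0 : d % 4 ≠ 0 := fun h0 => by
    simpa [Int.isUnit_iff] using hd 2 (Int.dvd_of_emod_eq_zero h0)
  obtain ⟨n, hn⟩ := h
  obtain ⟨q, hq⟩ : ∃ q, d = 4 * q + 2 ∨ d = 4 * q + 3 := ⟨d / 4, by omega⟩
  rcases Int.even_or_odd' x with ⟨a, rfl | rfl⟩ <;> rcases Int.even_or_odd' y with ⟨b, rfl | rfl⟩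
  · exact ⟨dvd_mul_right 2 a, dvd_mul_right 2 b⟩
  all_goals exfalso; rcases hq with rfl | rfl <;> ring_nf at hn <;> omega

/-- The `ℤ`-basis `1, √d` of `ℤ√d`, in which norms are computed. -/
noncomputable def zsqrtdBasis (d : ℤ) : Module.Basis (Fin 2) ℤ (ℤ√d) :=
  Module.Basis.ofEquivFun
    { toFun := fun z => ![z.re, z.im]
      invFun := fun f => ⟨f 0, f 1⟩
      left_inv := fun z => by simp
      right_inv := fun f => by ext i; fin_cases i <;> simp
      map_add' := fun x y => by simp
      map_smul' := fun n x => by simp [zsmul_eq_mul] }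

instance : Module.Free ℤ (ℤ√d) := .of_basis (zsqrtdBasis d)

instance : Module.Finite ℤ (ℤ√d) := .of_basis (zsqrtdBasis d)

theorem algebraNorm_zsqrtd (z : ℤ√d) : Algebra.norm ℤ z = z.norm := by
  rw [Algebra.norm_eq_matrix_det (zsqrtdBasis d), Matrix.det_fin_two]
  simp [Algebra.leftMulMatrix_eq_repr_mul, zsqrtdBasis, Zsqrtd.norm_def]

/-- The inclusion of `ℤ√d` into `ℚ(√d)`, the latter realized as a quadratic algebra, which
exhibits `ℤ√d` as the ring of integers when `d % 4 ≠ 1` is squarefree. -/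
def zsqrtdToRat (d : ℤ) : ℤ√d →+* QuadraticAlgebra ℚ (d : ℚ) 0 :=
  Zsqrtd.lift ⟨QuadraticAlgebra.omega, by
    simp [QuadraticAlgebra.omega_mul_omega_eq_mk, QuadraticAlgebra.ext_iff]⟩

theorem zsqrtdToRat_apply (z : ℤ√d) : zsqrtdToRat d z = ⟨z.re, z.im⟩ := by
  ext <;> simp [zsqrtdToRat]

theorem mem_range_zsqrtdToRat (hd : Squarefree d) (h4 : d % 4 ≠ 1)
    {z : QuadraticAlgebra ℚ (d : ℚ) 0} (hz : IsIntegral ℤ z) : ∃ w, zsqrtdToRat d w = z := by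
  have int_of_isIntegral {q : ℚ}
      (hq : IsIntegral ℤ (algebraMap ℚ (QuadraticAlgebra ℚ (d : ℚ) 0) q)) : ∃ n : ℤ, n = q :=
    IsIntegrallyClosed.isIntegral_iff.mp
      ((isIntegral_algebraMap_iff (algebraMap ℚ (QuadraticAlgebra ℚ (d : ℚ) 0)).injective).mp hq)
  have hstar : IsIntegral ℤ (star z) := map_isIntegral_int (starRingEnd _) hz
  obtain ⟨m, hm⟩ := int_of_isIntegral
    (QuadraticAlgebra.algebraMap_trace_eq_add_star z ▸ hz.add hstar)
  obtain ⟨n, hn⟩ := int_of_isIntegral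
    (QuadraticAlgebra.algebraMap_norm_eq_mul_star z ▸ hz.mul hstar)
  rw [QuadraticAlgebra.trace_def] at hm
  rw [QuadraticAlgebra.norm_def] at hn
  have hdisc : d * (2 * z.im) ^ 2 = ((m ^ 2 - 4 * n : ℤ) : ℚ) := by
    push_cast; rw [hm, hn]; ring
  obtain ⟨r, hr⟩ := exists_eq_intCast_of_mul_sq_eq_intCast hd hdisc
  rw [hr] at hdisc
  obtain ⟨⟨a, rfl⟩, b, rfl⟩ := two_dvd_of_four_dvd_sq_sub_mul_sq hd h4
    (x := m) (y := r) ⟨n, by have : d * r ^ 2 = m ^ 2 - 4 * n := by exact_mod_cast hdisc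
                             linarith⟩
  refine ⟨⟨a, b⟩, ?_⟩
  push_cast at hm hr
  rw [zsqrtdToRat_apply]
  ext <;> simp only <;> linarith

theorem not_isSquare_of_squarefree_of_emod_four (hd : Squarefree d) (h4 : d % 4 ≠ 1) :
    ¬ IsSquare d := by
  rintro ⟨r, rfl⟩
  rcases Int.isUnit_iff.mp (hd r dvd_rfl) with rfl | rfl <;> exact h4 rfl

theorem isDedekindDomain_zsqrtd (hd : Squarefree d) (h4 : d % 4 ≠ 1) :
    IsDedekindDomain (ℤ√d) := by
  have hsq : ¬ IsSquare d := not_isSquare_of_squarefree_of_emod_four hd h4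
  have : Fact (∀ r : ℚ, r ^ 2 ≠ (d : ℚ) + 0 * r) := ⟨fun r hr =>
    hsq (by simpa using (show IsSquare (d : ℚ) from ⟨r, by linarith⟩))⟩
  have hinj : Function.Injective (zsqrtdToRat d) := fun x y h => by
    simpa [zsqrtdToRat_apply, Zsqrtd.ext_iff] using h
  let : Algebra (ℤ√d) (QuadraticAlgebra ℚ (d : ℚ) 0) := (zsqrtdToRat d).toAlgebra
  have : IsDomain (ℤ√d) := hinj.isDomain (zsqrtdToRat d)
  have : IsIntegralClosure (ℤ√d) ℤ (QuadraticAlgebra ℚ (d : ℚ) 0) :=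
    { algebraMap_injective := hinj
      isIntegral_iff := ⟨mem_range_zsqrtdToRat hd h4, by
        rintro ⟨w, rfl⟩
        exact map_isIntegral_int (zsqrtdToRat d) (Algebra.IsIntegral.isIntegral w)⟩ }
  exact IsIntegralClosure.isDedekindDomain ℤ ℚ (QuadraticAlgebra ℚ (d : ℚ) 0) (ℤ√d)

end IntegersOfQuadraticFields

section SquareIdeals

variable {d : ℤ}

-- If `z = x + y√d`, then `m` divides `(2 d x)³` and `(2 d y)³` because `m ∣ x² + d y²` and
-- `m ∣ 2 x y`.
theorem dvd_two_mul_of_dvd_sq {m : ℤ} (hm : Squarefree m) {z : ℤ√d}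
    (h : (m : ℤ√d) ∣ z ^ 2) : (m : ℤ√d) ∣ (2 * d : ℤ) * z := by
  rw [Zsqrtd.intCast_dvd] at h ⊢
  simp only [pow_two, Zsqrtd.re_mul, Zsqrtd.im_mul] at h
  obtain ⟨⟨s, hs⟩, t, ht⟩ := h
  rw [Zsqrtd.re_smul, Zsqrtd.im_smul]
  constructor <;> rw [← hm.dvd_pow_iff_dvd three_ne_zero]
  · exact ⟨8 * d ^ 3 * z.re * s - 4 * d ^ 4 * z.im * t, by
      linear_combination 8 * d ^ 3 * z.re * hs - 4 * d ^ 4 * z.im * ht⟩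
  · exact ⟨8 * d ^ 2 * z.im * s - 4 * d ^ 2 * z.re * t, by
      linear_combination 8 * d ^ 2 * z.im * hs - 4 * d ^ 2 * z.re * ht⟩

theorem dvd_two_mul_of_sq_eq_span {m : ℤ} (hm : Squarefree m) {𝔟 : Ideal (ℤ√d)}
    (h : 𝔟 ^ 2 = Ideal.span {(m : ℤ√d)}) : m ∣ 2 * d := by
  have hle : Ideal.span {((2 * d : ℤ) : ℤ√d)} * 𝔟 ≤ Ideal.span {(m : ℤ√d)} := by
    rw [Ideal.span_singleton_mul_le_iff]
    intro z hz
    have hz2 : z ^ 2 ∈ 𝔟 ^ 2 := Ideal.pow_mem_pow hz 2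
    rw [h, Ideal.mem_span_singleton] at hz2
    exact Ideal.mem_span_singleton.mpr (dvd_two_mul_of_dvd_sq hm hz2)
  have hle2 := Ideal.pow_right_mono hle 2
  rw [mul_pow, h, Ideal.span_singleton_pow, Ideal.span_singleton_pow,
    Ideal.span_singleton_mul_span_singleton, Ideal.span_singleton_le_span_singleton,
    ← Int.cast_pow, ← Int.cast_pow, ← Int.cast_mul, Zsqrtd.intCast_dvd_intCast, pow_two m] at hle2
  exact (hm.dvd_pow_iff_dvd two_ne_zero).mp (Int.dvd_of_mul_dvd_mul_right hm.ne_zero hle2)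

theorem exists_sq_mul_squarefree {m : ℤ} (hm : m ≠ 0) :
    ∃ f r : ℤ, m = f ^ 2 * r ∧ Squarefree r := by
  obtain ⟨r, f, hfr, hr⟩ := Nat.sq_mul_squarefree m.natAbs
  refine ⟨f, m.sign * r, ?_, ?_⟩
  · rw [mul_left_comm, ← Nat.cast_pow, ← Nat.cast_mul, hfr, Int.sign_mul_natAbs]
  · rwa [← Int.squarefree_natAbs, Int.natAbs_mul, Int.natAbs_sign_of_ne_zero hm, one_mul,
      Int.natAbs_natCast]

theorem exists_eq_span_mul_of_sq_eq_span [IsDedekindDomain (ℤ√d)] {m : ℤ} (hm : m ≠ 0)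
    {𝔟 : Ideal (ℤ√d)} (h : 𝔟 ^ 2 = Ideal.span {(m : ℤ√d)}) :
    ∃ (f r : ℤ) (𝔠 : Ideal (ℤ√d)), m = f ^ 2 * r ∧ r ∣ 2 * d ∧ 𝔟 = Ideal.span {(f : ℤ√d)} * 𝔠 ∧
      𝔠 ^ 2 = Ideal.span {(r : ℤ√d)} := by
  obtain ⟨f, r, rfl, hr⟩ := exists_sq_mul_squarefree hm
  have hspan : Ideal.span {((f ^ 2 * r : ℤ) : ℤ√d)} =
      Ideal.span {(f : ℤ√d)} ^ 2 * Ideal.span {(r : ℤ√d)} := by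
    rw [Ideal.span_singleton_pow, Ideal.span_singleton_mul_span_singleton]; push_cast; rfl
  obtain ⟨𝔠, rfl⟩ : Ideal.span {(f : ℤ√d)} ∣ 𝔟 :=
    (UniqueFactorizationMonoid.pow_dvd_pow_iff_dvd two_ne_zero).mp ⟨_, h.trans hspan⟩
  have hf : f ≠ 0 := by rintro rfl; simp at hm
  have h𝔠 : 𝔠 ^ 2 = Ideal.span {(r : ℤ√d)} := by
    rw [hspan, mul_pow] at h
    exact mul_left_cancel₀ (pow_ne_zero 2 (by simpa using hf)) h
  exact ⟨f, r, 𝔠, rfl, dvd_two_mul_of_sq_eq_span hr h𝔠, rfl, h𝔠⟩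

theorem exists_natAbs_norm_eq_sq [IsDedekindDomain (ℤ√d)] {z : ℤ√d} {𝔞 : Ideal (ℤ√d)}
    (h : 𝔞 ^ 2 = Ideal.span {z}) : ∃ n : ℕ, z.norm.natAbs = n ^ 2 :=
  ⟨Ideal.absNorm 𝔞, by rw [← map_pow, h, Ideal.absNorm_span_singleton, algebraNorm_zsqrtd]⟩

end SquareIdeals

theorem sqrtd_dvd_iff {d : ℤ} {z : ℤ√d} : Zsqrtd.sqrtd ∣ z ↔ d ∣ z.re := by
  constructor
  · rintro ⟨w, rfl⟩
    simp
  · rintro ⟨c, hc⟩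
    exact ⟨⟨z.im, c⟩, by ext <;> simp [hc]⟩

section PrimeDiscriminant

variable {p : ℕ}

theorem eq_of_dvd_two_mul_prime (hp : p.Prime) {r : ℕ} (h : r ∣ 2 * p) :
    r = 1 ∨ r = 2 ∨ r = p ∨ r = 2 * p := by
  obtain ⟨x, y, hx, hy, rfl⟩ := Nat.dvd_mul.mp h
  rcases (Nat.dvd_prime Nat.prime_two).mp hx with rfl | rfl <;>
    rcases (Nat.dvd_prime hp).mp hy with rfl | rfl <;> simp

theorem squarefree_intCast_prime (hp : p.Prime) : Squarefree (p : ℤ) :=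
  Int.squarefree_natCast.mpr hp.prime.squarefree

theorem isDedekindDomain_zsqrtd_prime (hp : p.Prime) (h4 : p % 4 = 3) :
    IsDedekindDomain (ℤ√(p : ℤ)) :=
  isDedekindDomain_zsqrtd (squarefree_intCast_prime hp) (by omega)

theorem prime_sqrtd (hp : p.Prime) : Prime (Zsqrtd.sqrtd : ℤ√(p : ℤ)) := by
  have hp' := Nat.prime_iff_prime_int.mp hp
  refine ⟨fun h => ?_, fun h => ?_, fun z w h => ?_⟩
  · simpa using congrArg Zsqrtd.im h
  · exact hp'.not_isUnit (isUnit_of_dvd_one (sqrtd_dvd_iff.mp (h.dvd (a := 1))))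
  · rw [sqrtd_dvd_iff, Zsqrtd.re_mul, mul_assoc, Int.dvd_add_left (dvd_mul_right _ _)] at h
    simpa only [sqrtd_dvd_iff] using hp'.dvd_or_dvd h

theorem zsqrtd_norm_ne_zero (hp : p.Prime) {z : ℤ√(p : ℤ)} (hz : z ≠ 0) : z.norm ≠ 0 :=
  fun h => hz ((Zsqrtd.norm_eq_zero (fun n hn =>
    (Nat.prime_iff_prime_int.mp hp).not_isSquare ⟨n, hn⟩) z).mp h)

theorem zsqrtd_norm_ne_neg_sq (hp : p.Prime) (h4 : p % 4 = 3) (z : ℤ√(p : ℤ)) {n : ℤ}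
    (hn : n ≠ 0) : z.norm ≠ -n ^ 2 := by
  intro h
  have hsum : p * z.im.natAbs ^ 2 = z.re.natAbs ^ 2 + n.natAbs ^ 2 := by
    rw [Zsqrtd.norm_def] at h
    zify
    simp only [sq_abs]
    linarith
  have him : z.im.natAbs ≠ 0 := fun h0 => by
    rw [h0, zero_pow two_ne_zero, mul_zero, eq_comm, add_eq_zero] at hsum
    exact hn (by simpa using hsum.2)
  have hval := Nat.eq_sq_add_sq_iff.mp ⟨_, _, hsum⟩ p
    (Nat.mem_primeFactors.mpr
      ⟨hp, dvd_mul_right _ _, mul_ne_zero hp.ne_zero (pow_ne_zero 2 him)⟩) h4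
  have := Fact.mk hp
  rw [padicValNat.mul hp.ne_zero (pow_ne_zero 2 him), padicValNat.pow, padicValNat.self hp.one_lt,
    Nat.even_iff] at hval
  omega

theorem zsqrtd_norm_eq_one_of_isUnit (hp : p.Prime) (h4 : p % 4 = 3) {z : ℤ√(p : ℤ)}
    (hz : IsUnit z) : z.norm = 1 :=
  (Int.isUnit_iff.mp ((Zsqrtd.isUnit_iff_norm_isUnit z).mp hz)).resolve_right
    (zsqrtd_norm_ne_neg_sq hp h4 z one_ne_zero)

theorem isUnit_pellSolution {d : ℤ} (f : Pell.Solution₁ d) : IsUnit (f : ℤ√d) :=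
  .of_mul_eq_one _ (Unitary.mul_star_self_of_mem f.2)

theorem fundamental_ne_sq (hp : p.Prime) (h4 : p % 4 = 3) {f : Pell.Solution₁ (p : ℤ)}
    (hf : Pell.IsFundamental f) (z : ℤ√(p : ℤ)) : z ^ 2 ≠ f := by
  intro hz
  have hunit : IsUnit z := (isUnit_pow_iff two_ne_zero).mp (hz ▸ isUnit_pellSolution f)
  let g : Pell.Solution₁ (p : ℤ) :=
    ⟨z, Zsqrtd.norm_eq_one_iff_mem_unitary.mp (zsqrtd_norm_eq_one_of_isUnit hp h4 hunit)⟩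
  have hg : g ^ 2 = f := Subtype.ext hz
  obtain ⟨n, hn⟩ := hf.eq_zpow_or_neg_zpow g
  have : f ^ (2 * n - 1) = 1 := by
    rw [zpow_sub_one, mul_inv_eq_one, mul_comm, zpow_mul]
    conv_rhs => rw [← hg]
    rcases hn with h | h <;> rw [h]
    exacts [rfl, (neg_sq _).symm]
  have := (hf.zpow_eq_one_iff _).mp this
  omega

end PrimeDiscriminant

section TwoRamifies

variable {p : ℕ}

theorem zsqrtd_norm_ne_neg_two (h8 : p % 8 = 7) (z : ℤ√(p : ℤ)) : z.norm ≠ -2 := by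
  intro h
  have hsum : (z.re : ZMod 8) ^ 2 + (z.im : ZMod 8) ^ 2 = -2 := by
    have hp : (p : ZMod 8) = -1 := by rw [← ZMod.natCast_mod, h8]; rfl
    have := congrArg (Int.cast : ℤ → ZMod 8) h
    rw [Zsqrtd.norm_def] at this
    push_cast at this
    linear_combination this + (z.im : ZMod 8) ^ 2 * hp
  exact (by decide : ∀ a b : ZMod 8, a ^ 2 + b ^ 2 ≠ -2) _ _ hsum

-- Hilbert 90: `(z + n)² = z (z + z* + 2n)`, where the last factor is an integer.
theorem add_intCast_sq {d n : ℤ} {z : ℤ√d} (hz : z.norm = n ^ 2) :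
    (z + n) ^ 2 = z * (2 * (z.re + n) : ℤ) := by
  rw [Zsqrtd.norm_def] at hz
  ext
  · simp only [pow_two, Zsqrtd.re_mul, Zsqrtd.re_add, Zsqrtd.im_add, Zsqrtd.re_intCast,
      Zsqrtd.im_intCast]
    linear_combination -hz
  · simp only [pow_two, Zsqrtd.im_mul, Zsqrtd.re_add, Zsqrtd.im_add, Zsqrtd.re_intCast,
      Zsqrtd.im_intCast]
    ring

theorem exists_sq_eq_mul_of_dvd_two_mul (hp : p.Prime) (h4 : p % 4 = 3)
    (f : Pell.Solution₁ (p : ℤ)) (hf : 0 < f.x) :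
    ∃ (z : ℤ√(p : ℤ)) (r : ℕ), r ∣ 2 * p ∧ z ^ 2 = f * r := by
  have := isDedekindDomain_zsqrtd_prime hp h4
  have hsq : (f + 1 : ℤ√(p : ℤ)) ^ 2 = f * (2 * (f.x + 1) : ℤ) := by
    rw [show f.x = (f : ℤ√(p : ℤ)).re from rfl]
    simpa only [Int.cast_one] using
      add_intCast_sq (n := 1) ((Zsqrtd.norm_eq_one_iff_mem_unitary.mpr f.2).trans (one_pow 2).symm)
  have hm : 0 < 2 * (f.x + 1) := by omega
  have hspan : Ideal.span {(f + 1 : ℤ√(p : ℤ))} ^ 2 =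
      Ideal.span {((2 * (f.x + 1) : ℤ) : ℤ√(p : ℤ))} := by
    rw [Ideal.span_singleton_pow, hsq,
      Ideal.span_singleton_mul_left_unit (isUnit_pellSolution f)]
  obtain ⟨g, r, 𝔠, hgr, hr, h𝔠, -⟩ := exists_eq_span_mul_of_sq_eq_span hm.ne' hspan
  obtain ⟨z, hz⟩ : (g : ℤ√(p : ℤ)) ∣ f + 1 := by
    rw [← Ideal.span_singleton_le_span_singleton]
    exact h𝔠.le.trans Ideal.mul_le_left
  have hg : g ≠ 0 := by rintro rfl; omega
  lift r to ℕ using by nlinarith [sq_nonneg g]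
  refine ⟨z, r, by exact_mod_cast hr, mul_left_cancel₀ (a := (g : ℤ√(p : ℤ)) ^ 2)
    (pow_ne_zero 2 (Int.cast_ne_zero.mpr hg)) ?_⟩
  rw [← mul_pow, ← hz, hsq, hgr]
  push_cast
  ring

theorem exists_sq_eq_two_mul_fundamental (hp : p.Prime) (h4 : p % 4 = 3)
    {f : Pell.Solution₁ (p : ℤ)} (hf : Pell.IsFundamental f) :
    ∃ π : ℤ√(p : ℤ), π ^ 2 = 2 * f := by
  have := isDedekindDomain_zsqrtd_prime hp h4
  have sqrtd_sq : (Zsqrtd.sqrtd : ℤ√(p : ℤ)) ^ 2 = p := by rw [pow_two, Zsqrtd.dmuld]; simp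
  have div_sqrtd {z c : ℤ√(p : ℤ)} (h : z ^ 2 = p * c) : ∃ w, w ^ 2 = c := by
    rw [← sqrtd_sq] at h
    obtain ⟨w, rfl⟩ := (prime_sqrtd hp).dvd_of_dvd_pow ((dvd_pow_self _ two_ne_zero).trans ⟨c, h⟩)
    exact ⟨w, mul_left_cancel₀ (pow_ne_zero 2 (prime_sqrtd hp).ne_zero) (by rw [← h, mul_pow])⟩
  obtain ⟨z, r, hr, hz⟩ := exists_sq_eq_mul_of_dvd_two_mul hp h4 f hf.x_pos
  rcases eq_of_dvd_two_mul_prime hp hr with rfl | rfl | rfl | rfl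
  · exact absurd (by simpa using hz) (fundamental_ne_sq hp h4 hf z)
  · exact ⟨z, by rw [hz, mul_comm]; rfl⟩
  · obtain ⟨w, hw⟩ := div_sqrtd (hz.trans (mul_comm _ _))
    exact absurd hw (fundamental_ne_sq hp h4 hf w)
  · exact div_sqrtd (c := 2 * f) (by rw [hz]; push_cast; ring)

theorem norm_eq_two_of_sq_eq_two_mul (hp : p.Prime) (h8 : p % 8 = 7) {ε π : ℤ√(p : ℤ)}
    (hε : IsUnit ε) (h : π ^ 2 = 2 * ε) : π.norm = 2 := by
  have hnorm : π.norm ^ 2 = 2 ^ 2 := by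
    have := congrArg Zsqrtd.norm h
    rw [pow_two, Zsqrtd.norm_mul, Zsqrtd.norm_mul,
      zsqrtd_norm_eq_one_of_isUnit hp (by omega) hε] at this
    rw [pow_two, this]; rfl
  exact (sq_eq_sq_iff_eq_or_eq_neg.mp hnorm).resolve_right (zsqrtd_norm_ne_neg_two h8 π)

end TwoRamifies

section SquarePrincipal

variable {p : ℕ}

theorem exists_span_intCast_eq_span_sq (hp : p.Prime) (h4 : p % 4 = 3) {r : ℤ}
    (hr : r ∣ 2 * p) : ∃ c : ℤ√(p : ℤ), Ideal.span {(r : ℤ√(p : ℤ))} = Ideal.span {c} ^ 2 := by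
  have := isDedekindDomain_zsqrtd_prime hp h4
  obtain ⟨f, hf⟩ := Pell.IsFundamental.exists_of_not_isSquare
    (Int.natCast_pos.mpr hp.pos) (Nat.prime_iff_prime_int.mp hp).not_isSquare
  obtain ⟨π, hπ⟩ := exists_sq_eq_two_mul_fundamental hp h4 hf
  have hspan2 : Ideal.span {π ^ 2} = Ideal.span {(2 : ℤ√(p : ℤ))} := by
    rw [hπ, Ideal.span_singleton_mul_right_unit (isUnit_pellSolution f)]
  have hspanp : Ideal.span {(Zsqrtd.sqrtd : ℤ√(p : ℤ)) ^ 2} = Ideal.span {(p : ℤ√(p : ℤ))} := by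
    rw [pow_two, Zsqrtd.dmuld, Int.cast_natCast]
  have hnat : Ideal.span {(r : ℤ√(p : ℤ))} = Ideal.span {(r.natAbs : ℤ√(p : ℤ))} := by
    rw [Ideal.span_singleton_eq_span_singleton, ← Int.cast_natCast]
    exact r.associated_natAbs.map (Int.castRingHom _)
  have hr' : r.natAbs ∣ 2 * p := Int.natAbs_dvd_natAbs.mpr hr
  rw [hnat]
  simp only [Ideal.span_singleton_pow]
  rcases eq_of_dvd_two_mul_prime hp hr' with h | h | h | h <;> rw [h]
  · exact ⟨1, by simp⟩
  · exact ⟨π, hspan2.symm⟩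
  · exact ⟨_, hspanp.symm⟩
  · refine ⟨π * Zsqrtd.sqrtd, ?_⟩
    rw [mul_pow, ← Ideal.span_singleton_mul_span_singleton, hspan2, hspanp,
      Ideal.span_singleton_mul_span_singleton]
    push_cast
    rfl

theorem exists_eq_span_singleton_of_sq_eq_span_intCast (hp : p.Prime) (h4 : p % 4 = 3) {m : ℤ}
    (hm : m ≠ 0) {𝔟 : Ideal (ℤ√(p : ℤ))} (h : 𝔟 ^ 2 = Ideal.span {(m : ℤ√(p : ℤ))}) :
    ∃ c, 𝔟 = Ideal.span {c} := by
  have := isDedekindDomain_zsqrtd_prime hp h4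
  obtain ⟨f, r, 𝔠, -, hr, rfl, h𝔠⟩ := exists_eq_span_mul_of_sq_eq_span hm h
  obtain ⟨c, hc⟩ := exists_span_intCast_eq_span_sq hp h4 hr
  obtain rfl := pow_left_injective two_ne_zero (h𝔠.trans hc)
  exact ⟨f * c, Ideal.span_singleton_mul_span_singleton _ _⟩

theorem exists_sq_norm_of_sq_eq_span (hp : p.Prime) (h4 : p % 4 = 3) {z : ℤ√(p : ℤ)}
    {𝔞 : Ideal (ℤ√(p : ℤ))} (h : 𝔞 ^ 2 = Ideal.span {z}) : ∃ n : ℕ, z.norm = n ^ 2 := by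
  have := isDedekindDomain_zsqrtd_prime hp h4
  obtain ⟨n, hn⟩ := exists_natAbs_norm_eq_sq h
  refine ⟨n, ?_⟩
  rcases Int.natAbs_eq z.norm with hz | hz <;> rw [hn, Nat.cast_pow] at hz
  · exact hz
  · obtain rfl : n = 0 := by
      by_contra hn0
      exact zsqrtd_norm_ne_neg_sq hp h4 z (Int.natCast_ne_zero.mpr hn0) hz
    simpa using hz

-- If `z` has norm `n²`, then by `add_intCast_sq` the ideals `𝔞` and `(z + n)` differ by an ideal
-- whose square is generated by an integer.
theorem exists_eq_span_singleton_of_sq_eq_span (hp : p.Prime) (h4 : p % 4 = 3)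
    {z : ℤ√(p : ℤ)} (hz : z ≠ 0) {𝔞 : Ideal (ℤ√(p : ℤ))}
    (h : 𝔞 ^ 2 = Ideal.span {z}) : ∃ c, 𝔞 = Ideal.span {c} := by
  have := isDedekindDomain_zsqrtd_prime hp h4
  obtain ⟨n, hn⟩ := exists_sq_norm_of_sq_eq_span hp h4 h
  have hn0 : (n : ℤ) ≠ 0 := by
    rintro h0
    exact zsqrtd_norm_ne_zero hp hz (by rw [hn, h0]; rfl)
  have hsq : (z + n) ^ 2 = z * (2 * (z.re + n) : ℤ) := by
    simpa only [Int.cast_natCast] using add_intCast_sq hn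
  by_cases hzn : z + n = 0
  · refine exists_eq_span_singleton_of_sq_eq_span_intCast hp h4 (neg_ne_zero.mpr hn0) ?_
    rw [h, eq_neg_of_add_eq_zero_left hzn]; push_cast; rfl
  have hspan : Ideal.span {z + n} ^ 2 =
      𝔞 ^ 2 * Ideal.span {((2 * (z.re + n) : ℤ) : ℤ√(p : ℤ))} := by
    rw [h, Ideal.span_singleton_pow, hsq, Ideal.span_singleton_mul_span_singleton]
  obtain ⟨𝔟, h𝔟⟩ : 𝔞 ∣ Ideal.span {z + n} :=
    (UniqueFactorizationMonoid.pow_dvd_pow_iff_dvd two_ne_zero).mp ⟨_, hspan⟩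
  have h𝔞0 : 𝔞 ^ 2 ≠ 0 := by simpa [h] using hz
  have hm : 2 * (z.re + n) ≠ 0 := fun h0 => hzn (by simpa [h0] using hsq)
  obtain ⟨b, rfl⟩ := exists_eq_span_singleton_of_sq_eq_span_intCast hp h4 hm
    (mul_left_cancel₀ h𝔞0 (by rw [← mul_pow, ← h𝔟, hspan]))
  have hb : b ≠ 0 := by rintro rfl; simp [hzn] at h𝔟
  obtain ⟨c, hc⟩ : b ∣ z + n := by
    rw [← Ideal.span_singleton_le_span_singleton]
    exact h𝔟.le.trans Ideal.mul_le_right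
  refine ⟨c, mul_right_cancel₀ (b := Ideal.span {b}) (by simpa using hb) ?_⟩
  rw [← h𝔟, hc, Ideal.span_singleton_mul_span_singleton, mul_comm]

theorem exists_associated_sq_of_mul_eq_unit_mul_sq (hp : p.Prime) (h4 : p % 4 = 3)
    {x y w β : ℤ√(p : ℤ)} (hxy : IsCoprime x y) (hx : x ≠ 0) (hw : IsUnit w)
    (h : x * y = w * β ^ 2) : ∃ c, Associated x (c ^ 2) := by
  have := isDedekindDomain_zsqrtd_prime hp h4
  obtain ⟨𝔞, h𝔞⟩ := exists_eq_pow_of_mul_eq_pow_of_coprime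
    (a := Ideal.span {x}) (b := Ideal.span {y}) (c := Ideal.span {β}) (n := 2)
    ((Ideal.isCoprime_span_singleton_iff x y).mpr hxy)
    (by rw [Ideal.span_singleton_mul_span_singleton, h, Ideal.span_singleton_mul_left_unit hw,
      Ideal.span_singleton_pow])
  obtain ⟨c, rfl⟩ := exists_eq_span_singleton_of_sq_eq_span hp h4 hx h𝔞.symm
  refine ⟨c, ?_⟩
  rwa [Ideal.span_singleton_pow, Ideal.span_singleton_eq_span_singleton] at h𝔞

-- If `√p` divided `x`, then `x` would be `√p` times a unit times a square, whose norm is negative.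
theorem exists_associated_sq_of_mul_eq_sqrtd_mul_sq (hp : p.Prime) (h4 : p % 4 = 3)
    {x y w β : ℤ√(p : ℤ)} (hxy : IsCoprime x y) (hx : 0 < x.norm) (hw : IsUnit w)
    (h : x * y = w * Zsqrtd.sqrtd * β ^ 2) : ∃ c, Associated x (c ^ 2) := by
  have := isDedekindDomain_zsqrtd_prime hp h4
  have hx0 : x ≠ 0 := by rintro rfl; simp at hx
  have hsqrt0 : (Zsqrtd.sqrtd : ℤ√(p : ℤ)) ≠ 0 := (prime_sqrtd hp).ne_zero
  rcases (prime_sqrtd hp).dvd_or_dvd ⟨w * β ^ 2, by rw [h]; ring⟩ with ⟨x', rfl⟩ | ⟨y', rfl⟩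
  · have h' : x' * y = w * β ^ 2 := mul_left_cancel₀ hsqrt0 (by linear_combination h)
    obtain ⟨c, v, hv⟩ := exists_associated_sq_of_mul_eq_unit_mul_sq hp h4 hxy.of_mul_left_right
      (right_ne_zero_of_mul hx0) hw h'
    have hnorm : x'.norm = c.norm ^ 2 := by
      have := congrArg Zsqrtd.norm hv
      rwa [Zsqrtd.norm_mul, zsqrtd_norm_eq_one_of_isUnit hp h4 v.isUnit, mul_one, pow_two,
        Zsqrtd.norm_mul, ← pow_two] at this
    rw [Zsqrtd.norm_mul, hnorm] at hx
    have : (Zsqrtd.sqrtd : ℤ√(p : ℤ)).norm = -p := by simp [Zsqrtd.norm_def]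
    rw [this] at hx
    nlinarith [mul_nonneg (Int.natCast_nonneg p) (sq_nonneg c.norm)]
  · exact exists_associated_sq_of_mul_eq_unit_mul_sq hp h4 hxy.of_mul_right_right hx0 hw
      (mul_left_cancel₀ hsqrt0 (show _ * (x * y') = _ * (w * β ^ 2) by linear_combination h))

end SquarePrincipal

section TwoAdic

variable {p : ℕ}

theorem isCoprime_two_of_not_two_dvd_add {d : ℤ} (hd : Odd d) {z : ℤ√d}
    (hz : ¬ 2 ∣ z.re + z.im) : IsCoprime z 2 := by
  rw [← even_iff_two_dvd] at hz
  have hnorm : Odd z.norm := by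
    rw [Zsqrtd.norm_def]
    simp only [← Int.not_even_iff_odd, Int.even_add, Int.even_sub, Int.even_mul] at *
    tauto
  have hcop : IsCoprime z.norm 2 := Int.isCoprime_two_right.mpr hnorm
  have := hcop.map (Int.castRingHom (ℤ√d))
  simp only [eq_intCast, Int.cast_ofNat, Zsqrtd.norm_eq_mul_conj] at this
  exact this.of_mul_left_left

theorem four_mul_intCast_zmod_eight_eq_zero_iff (n : ℤ) : 4 * (n : ZMod 8) = 0 ↔ 2 ∣ n := by
  rw [show 4 * (n : ZMod 8) = ((4 * n : ℤ) : ZMod 8) by push_cast; rfl,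
    ZMod.intCast_zmod_eq_zero_iff_dvd]
  push_cast
  omega

theorem two_dvd_zsqrtd_iff {d : ℤ} {z : ℤ√d} : 2 ∣ z ↔ 2 ∣ z.re ∧ 2 ∣ z.im := by
  simpa using Zsqrtd.intCast_dvd 2 z

theorem odd_of_sq_sub_mul_sq_eq_two {d a b : ℤ} (hd : Odd d) (h : a ^ 2 - d * b ^ 2 = 2) :
    Odd a ∧ Odd b := by
  obtain ⟨q, rfl⟩ := hd
  rcases Int.even_or_odd' a with ⟨a, rfl | rfl⟩ <;> rcases Int.even_or_odd' b with ⟨b, rfl | rfl⟩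
  on_goal 4 => exact ⟨⟨a, rfl⟩, b, rfl⟩
  all_goals exfalso; ring_nf at h; omega

theorem exists_odd_eight_dvd_mul_sqrtd_sub (hp : p.Prime) (h8 : p % 8 = 7) {ε π : ℤ√(p : ℤ)}
    (hε : IsUnit ε) (hπ : π ^ 2 = 2 * ε) :
    ∃ s : ℤ, Odd s ∧ ((8 : ℤ) : ℤ√(p : ℤ)) ∣ ε * Zsqrtd.sqrtd - (s : ℤ√(p : ℤ)) := by
  have hnorm := norm_eq_two_of_sq_eq_two_mul hp h8 hε hπ
  have hre := congrArg Zsqrtd.re hπ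
  have him := congrArg Zsqrtd.im hπ
  simp only [pow_two, Zsqrtd.re_mul, Zsqrtd.im_mul, Zsqrtd.re_ofNat, Zsqrtd.im_ofNat,
    Nat.cast_ofNat, mul_zero, zero_mul, add_zero] at hre him
  rw [Zsqrtd.norm_def] at hnorm
  have hp_odd : Odd (p : ℤ) := by grind
  have hπodd := odd_of_sq_sub_mul_sq_eq_two hp_odd (a := π.re) (b := π.im)
    (by linear_combination hnorm)
  refine ⟨p * ε.im, ?_, (Zsqrtd.intCast_dvd _ _).mpr ⟨by simp, ?_⟩⟩
  · rw [show ε.im = π.re * π.im by linarith]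
    exact hp_odd.mul (hπodd.1.mul hπodd.2)
  · simpa [show ε.re = π.re ^ 2 - 1 by linarith] using Int.eight_dvd_sq_sub_one_of_odd hπodd.1

theorem zmod_eight_of_eight_dvd (h8 : p % 8 = 7) {n s : ℤ} {t β : ℤ√(p : ℤ)}
    (h : ((8 : ℤ) : ℤ√(p : ℤ)) ∣ t ^ 2 - n - s * β ^ 2) :
    (t.re ^ 2 - t.im ^ 2 - n : ZMod 8) = s * (β.re ^ 2 - β.im ^ 2) ∧
      (2 * t.re * t.im : ZMod 8) = s * (2 * β.re * β.im) := by
  have hp : (p : ZMod 8) = -1 := by rw [← ZMod.natCast_mod, h8]; rfl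
  rw [Zsqrtd.intCast_dvd] at h
  obtain ⟨hre, him⟩ := h
  have hre' := (ZMod.intCast_zmod_eq_zero_iff_dvd _ 8).mpr hre
  have him' := (ZMod.intCast_zmod_eq_zero_iff_dvd _ 8).mpr him
  simp only [pow_two, Zsqrtd.re_mul, Zsqrtd.im_mul, Zsqrtd.re_sub, Zsqrtd.im_sub,
    Zsqrtd.re_intCast, Zsqrtd.im_intCast] at hre' him'
  push_cast at hre' him'
  rw [hp] at hre' him'
  constructor
  · linear_combination hre'
  · linear_combination him'

theorem two_dvd_of_eight_dvd_sq_sub_four (h8 : p % 8 = 7) {s : ℤ} (hs : Odd s)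
    {t β : ℤ√(p : ℤ)} (h : ((8 : ℤ) : ℤ√(p : ℤ)) ∣ t ^ 2 - (4 : ℤ) - s * β ^ 2)
    (heven : 2 ∣ t.re + t.im) : 2 ∣ t ∧ 2 ∣ β := by
  have key : ∀ a b c e s : ZMod 8, 4 * s ≠ 0 → a ^ 2 - b ^ 2 - 4 = s * (c ^ 2 - e ^ 2) →
      2 * a * b = s * (2 * c * e) → 4 * (a + b) = 0 →
      (4 * a = 0 ∧ 4 * b = 0) ∧ 4 * c = 0 ∧ 4 * e = 0 := by decide +kernel
  rw [← Int.not_even_iff_odd, even_iff_two_dvd, ← four_mul_intCast_zmod_eight_eq_zero_iff] at hs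
  obtain ⟨hre, him⟩ := zmod_eight_of_eight_dvd h8 h
  simp only [two_dvd_zsqrtd_iff, ← four_mul_intCast_zmod_eight_eq_zero_iff] at heven ⊢
  exact key _ _ _ _ s hs (by exact_mod_cast hre) him
    (by exact_mod_cast heven)

theorem two_dvd_of_eight_dvd_sq_sub_one (h8 : p % 8 = 7) {s : ℤ} (hs : Odd s)
    {t β : ℤ√(p : ℤ)} (h : ((8 : ℤ) : ℤ√(p : ℤ)) ∣ t ^ 2 - (1 : ℤ) - s * β ^ 2)
    (hodd : ¬ 2 ∣ t.re + t.im) : 2 ∣ t - 1 ∧ 2 ∣ β := by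
  have key : ∀ a b c e s : ZMod 8, 4 * s ≠ 0 → a ^ 2 - b ^ 2 - 1 = s * (c ^ 2 - e ^ 2) →
      2 * a * b = s * (2 * c * e) → 4 * (a + b) ≠ 0 →
      (4 * (a - 1) = 0 ∧ 4 * b = 0) ∧ 4 * c = 0 ∧ 4 * e = 0 := by decide +kernel
  rw [← Int.not_even_iff_odd, even_iff_two_dvd, ← four_mul_intCast_zmod_eight_eq_zero_iff] at hs
  obtain ⟨hre, him⟩ := zmod_eight_of_eight_dvd h8 h
  simp only [two_dvd_zsqrtd_iff, ← four_mul_intCast_zmod_eight_eq_zero_iff, Zsqrtd.re_sub,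
    Zsqrtd.im_sub, Zsqrtd.re_one, Zsqrtd.im_one, sub_zero] at hodd ⊢
  simpa using key _ _ _ _ s hs (by exact_mod_cast hre) him
    (by exact_mod_cast hodd)

variable {ε π t β : ℤ√(p : ℤ)}

theorem exists_associated_sq_add_two_of_odd (hp : p.Prime) (h4 : p % 4 = 3)
    (hε : IsUnit ε) (h : t ^ 2 - 4 = ε * Zsqrtd.sqrtd * β ^ 2) (ht : 0 < (t + 2).norm)
    (hodd : ¬ 2 ∣ t.re + t.im) : ∃ c, Associated (t + 2) (c ^ 2) := by
  have hcop : IsCoprime (t + 2) (2 ^ 2) :=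
    (isCoprime_two_of_not_two_dvd_add (by grind) (by
      simp only [Zsqrtd.re_add, Zsqrtd.im_add, Zsqrtd.re_ofNat, Zsqrtd.im_ofNat, Nat.cast_ofNat]
      omega)).pow_right
  refine exists_associated_sq_of_mul_eq_sqrtd_mul_sq hp h4 (y := t - 2) ?_ ht hε
    (show _ = _ * β ^ 2 by linear_combination h)
  rw [show t - 2 = -2 ^ 2 + (t + 2) * 1 by ring]
  exact (IsCoprime.neg_right hcop).add_mul_left_right 1

theorem exists_associated_sq_two_mul_add_one_of_even (hp : p.Prime) (h4 : p % 4 = 3)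
    (hπ : π ^ 2 = 2 * ε) (hε : IsUnit ε) (h : t ^ 2 - 1 = ε * Zsqrtd.sqrtd * β ^ 2)
    (ht : 0 < (t + 1).norm) (heven : 2 ∣ t.re + t.im) :
    ∃ c, Associated (2 * (t + 1)) (c ^ 2) := by
  have hcop : IsCoprime (t + 1) 2 :=
    isCoprime_two_of_not_two_dvd_add (by grind) (by
      rw [Zsqrtd.re_add, Zsqrtd.im_add, Zsqrtd.re_one, Zsqrtd.im_one]
      omega)
  have hcop' : IsCoprime (t + 1) (t - 1) := by
    rw [show t - 1 = -2 + (t + 1) * 1 by ring]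
    exact (IsCoprime.neg_right hcop).add_mul_left_right 1
  obtain ⟨c, hc⟩ := exists_associated_sq_of_mul_eq_sqrtd_mul_sq hp h4 hcop' ht hε
    (show _ = _ * β ^ 2 by linear_combination h)
  refine ⟨π * c, ?_⟩
  rw [mul_pow, hπ]
  exact (associated_mul_unit_right 2 _ hε).mul_mul hc

theorem exists_associated_sq_add_two (hp : p.Prime) (h8 : p % 8 = 7)
    (hπ : π ^ 2 = 2 * ε)
    (hε : IsUnit ε) (h : t ^ 2 - 4 = ε * Zsqrtd.sqrtd * β ^ 2) (ht : 0 < (t + 2).norm) :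
    ∃ c, Associated (t + 2) (c ^ 2) := by
  have h4 : p % 4 = 3 := by omega
  have := isDedekindDomain_zsqrtd_prime hp h4
  obtain ⟨s, hs, w, hw⟩ := exists_odd_eight_dvd_mul_sqrtd_sub hp h8 hε hπ
  by_cases hodd : 2 ∣ t.re + t.im
  swap
  · exact exists_associated_sq_add_two_of_odd hp h4 hε h ht hodd
  obtain ⟨⟨t, rfl⟩, β, rfl⟩ := two_dvd_of_eight_dvd_sq_sub_four (β := β) (by omega) hs
    ⟨w * β ^ 2, by push_cast at hw ⊢; linear_combination h + β ^ 2 * hw⟩ hodd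
  have h' : t ^ 2 - 1 = ε * Zsqrtd.sqrtd * β ^ 2 :=
    mul_left_cancel₀ (a := 2 * 2) (by simp) (by linear_combination h)
  rw [show 2 * t + 2 = 2 * (t + 1) by ring] at ht ⊢
  have norm_pos {z : ℤ√(p : ℤ)} (hz : 0 < (2 * z).norm) : 0 < z.norm := by
    rw [Zsqrtd.norm_mul, show (2 : ℤ√(p : ℤ)).norm = 4 by simp [Zsqrtd.norm_def]] at hz
    omega
  by_cases hodd' : 2 ∣ t.re + t.im
  · exact exists_associated_sq_two_mul_add_one_of_even hp h4 hπ hε h' (norm_pos ht) hodd'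
  obtain ⟨⟨τ, hτ⟩, β, rfl⟩ := two_dvd_of_eight_dvd_sq_sub_one (β := β) (by omega) hs
    ⟨w * β ^ 2, by push_cast at hw ⊢; linear_combination h' + β ^ 2 * hw⟩ hodd'
  obtain rfl : t = 2 * τ + 1 := by linear_combination hτ
  rw [show 2 * τ + 1 + 1 = 2 * (τ + 1) by ring] at ht ⊢
  have hprod : (τ + 1) * τ = ε * Zsqrtd.sqrtd * β ^ 2 :=
    mul_left_cancel₀ (a := 2 * 2) (by simp) (by linear_combination h')
  obtain ⟨c, hc⟩ := exists_associated_sq_of_mul_eq_sqrtd_mul_sq hp h4 ⟨1, -1, by ring⟩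
    (norm_pos (norm_pos ht)) hε hprod
  refine ⟨2 * c, ?_⟩
  rw [mul_pow, pow_two, ← mul_assoc]
  exact hc.mul_left _

end TwoAdic

theorem exists_add_mul_of_mem_adjoin_simple {K L : Type*} [Field K] [Field L] [Algebra K L]
    {F : IntermediateField K L} {α x : L} (hα : IsAlgebraic K α) (h2 : α ^ 2 ∈ F) (hx : x ∈ K⟮α⟯) :
    ∃ A ∈ F, ∃ B ∈ F, x = A + B * α := by
  rw [← mem_toSubalgebra, adjoin_simple_toSubalgebra_of_isAlgebraic hα] at hx
  induction hx using Algebra.adjoin_induction with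
  | mem x hx => exact ⟨0, zero_mem F, 1, one_mem F, by rw [Set.mem_singleton_iff.mp hx]; ring⟩
  | algebraMap r => exact ⟨algebraMap K L r, F.algebraMap_mem r, 0, zero_mem F, by ring⟩
  | add x y _ _ ihx ihy =>
    obtain ⟨A, hA, B, hB, rfl⟩ := ihx
    obtain ⟨C, hC, D, hD, rfl⟩ := ihy
    exact ⟨A + C, add_mem hA hC, B + D, add_mem hB hD, by ring⟩
  | mul x y _ _ ihx ihy =>
    obtain ⟨A, hA, B, hB, rfl⟩ := ihx
    obtain ⟨C, hC, D, hD, rfl⟩ := ihy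
    exact ⟨A * C + B * D * α ^ 2, add_mem (mul_mem hA hC) (mul_mem (mul_mem hB hD) h2),
      A * D + B * C, add_mem (mul_mem hA hD) (mul_mem hB hC), by ring⟩

section RealEmbedding

variable {p : ℕ}

/-- The real embedding of `ℤ√p` for which `√p` is positive. -/
noncomputable def zsqrtdToReal (p : ℕ) : ℤ√(p : ℤ) →+* ℝ :=
  Zsqrtd.toReal (Int.natCast_nonneg p)

theorem zsqrtdToReal_apply (z : ℤ√(p : ℤ)) : zsqrtdToReal p z = z.re + z.im * √(p : ℝ) := by
  simp [zsqrtdToReal, Zsqrtd.toReal]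

theorem zsqrtdToReal_sqrtd : zsqrtdToReal p Zsqrtd.sqrtd = √(p : ℝ) := by
  simp [zsqrtdToReal_apply]

theorem zsqrtdToReal_star_sqrtd : zsqrtdToReal p (star Zsqrtd.sqrtd) = -√(p : ℝ) := by
  simp [zsqrtdToReal_apply]

theorem zsqrtdToReal_mul_star (z : ℤ√(p : ℤ)) :
    zsqrtdToReal p z * zsqrtdToReal p (star z) = z.norm := by
  rw [← map_mul, ← Zsqrtd.norm_eq_mul_conj, map_intCast]

theorem zsqrtdToReal_injective (hp : p.Prime) : Function.Injective (zsqrtdToReal p) :=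
  Zsqrtd.toReal_injective _ fun n hn => (Nat.prime_iff_prime_int.mp hp).not_isSquare ⟨n, hn⟩

theorem zsqrtdToReal_star_pos {z : ℤ√(p : ℤ)} (hz : z.norm = 1) (hpos : 0 < zsqrtdToReal p z) :
    0 < zsqrtdToReal p (star z) := by
  have h := zsqrtdToReal_mul_star z
  rw [hz, Int.cast_one] at h
  exact (pos_iff_pos_of_mul_pos (h ▸ one_pos)).mp hpos

theorem one_lt_zsqrtdToReal_fundamental {f : Pell.Solution₁ (p : ℤ)} (hf : Pell.IsFundamental f) :
    1 < zsqrtdToReal p f := by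
  have hx : (1 : ℝ) < f.x := mod_cast hf.1
  have hy : (0 : ℝ) < f.y := mod_cast hf.2.1
  have hxy : zsqrtdToReal p f = f.x + f.y * √(p : ℝ) := zsqrtdToReal_apply _
  rw [hxy]
  exact lt_add_of_lt_of_nonneg hx (by positivity)

theorem exists_zpow_fundamental_of_isUnit (hp : p.Prime) (h4 : p % 4 = 3)
    {f : Pell.Solution₁ (p : ℤ)} (hf : Pell.IsFundamental f) {z : ℤ√(p : ℤ)} (hz : IsUnit z)
    (hpos : 0 < zsqrtdToReal p z) : ∃ n : ℤ, z = (f ^ n : Pell.Solution₁ (p : ℤ)) := by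
  let g : Pell.Solution₁ (p : ℤ) :=
    ⟨z, Zsqrtd.norm_eq_one_iff_mem_unitary.mp (zsqrtd_norm_eq_one_of_isUnit hp h4 hz)⟩
  let v : Pell.Solution₁ (p : ℤ) →* ℝ :=
    (zsqrtdToReal p).toMonoidHom.comp (unitary (ℤ√(p : ℤ))).subtype
  obtain ⟨n, hn | hn⟩ := hf.eq_zpow_or_neg_zpow g
  · exact ⟨n, congrArg Subtype.val hn⟩
  · have hfn : 0 < v (f ^ n) := by
      rw [map_zpow']
      · exact zpow_pos (zero_lt_one.trans (one_lt_zsqrtdToReal_fundamental hf)) n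
      · exact fun x => eq_inv_of_mul_eq_one_left (by rw [← map_mul, inv_mul_cancel, map_one])
    have hz : z = -(f ^ n : Pell.Solution₁ (p : ℤ)) := congrArg Subtype.val hn
    rw [hz, map_neg] at hpos
    exact absurd (neg_pos.mp hpos) hfn.not_gt

theorem isIntegral_sqrt_natCast (p : ℕ) : IsIntegral ℤ √(p : ℝ) :=
  .of_pow two_pos (by
    rw [Real.sq_sqrt p.cast_nonneg]; exact isIntegral_algebraMap (x := (p : ℤ)))

theorem isIntegral_zsqrtdToReal (z : ℤ√(p : ℤ)) : IsIntegral ℤ (zsqrtdToReal p z) :=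
  map_isIntegral_int (zsqrtdToReal p) (Algebra.IsIntegral.isIntegral z)

theorem zsqrtdToReal_mem (z : ℤ√(p : ℤ)) : zsqrtdToReal p z ∈ ℚ⟮√(p : ℝ)⟯ := by
  rw [zsqrtdToReal_apply]
  exact add_mem (intCast_mem _ _) (mul_mem (intCast_mem _ _) (mem_adjoin_simple_self ℚ _))

theorem exists_rat_add_rat_mul_sqrt {x : ℝ} (hx : x ∈ ℚ⟮√(p : ℝ)⟯) :
    ∃ a b : ℚ, x = a + b * √(p : ℝ) := by
  obtain ⟨A, hA, B, hB, rfl⟩ := exists_add_mul_of_mem_adjoin_simple (F := ⊥)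
    (isIntegral_sqrt_natCast p).tower_top.isAlgebraic
    (by rw [Real.sq_sqrt p.cast_nonneg]; exact _root_.natCast_mem _ p) hx
  obtain ⟨a, rfl⟩ := mem_bot.mp hA
  obtain ⟨b, rfl⟩ := mem_bot.mp hB
  exact ⟨a, b, rfl⟩

theorem exists_zsqrtd_of_isIntegral (hp : p.Prime) (h4 : p % 4 = 3) {x : ℝ}
    (hx : x ∈ ℚ⟮√(p : ℝ)⟯) (hint : IsIntegral ℤ x) : ∃ z, zsqrtdToReal p z = x := by
  have : Fact (∀ r : ℚ, r ^ 2 ≠ ((p : ℤ) : ℚ) + 0 * r) := ⟨fun r hr =>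
    (Nat.prime_iff_prime_int.mp hp).not_isSquare (by
      simpa using (show IsSquare ((p : ℤ) : ℚ) from ⟨r, by linarith⟩))⟩
  let φ : QuadraticAlgebra ℚ ((p : ℤ) : ℚ) 0 →ₐ[ℚ] ℝ :=
    QuadraticAlgebra.lift ⟨√(p : ℝ), by
      rw [Real.mul_self_sqrt p.cast_nonneg, zero_smul, add_zero, Algebra.smul_def]; simp⟩
  obtain ⟨a, b, rfl⟩ := exists_rat_add_rat_mul_sqrt hx
  have hφ : φ ⟨a, b⟩ = a + b * √(p : ℝ) := by
    change a • (1 : ℝ) + b • √(p : ℝ) = _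
    simp only [Algebra.smul_def, mul_one, eq_ratCast]
  rw [← hφ] at hint
  obtain ⟨z, hz⟩ := mem_range_zsqrtdToRat (squarefree_intCast_prime hp) (by omega)
    ((isIntegral_algHom_iff (φ.restrictScalars ℤ) φ.injective).mp hint)
  refine ⟨z, ?_⟩
  obtain ⟨rfl, rfl⟩ := QuadraticAlgebra.ext_iff.mp ((zsqrtdToRat_apply z).symm.trans hz)
  rw [zsqrtdToReal_apply, Rat.cast_intCast, Rat.cast_intCast]

end RealEmbedding

section RealUnits

variable {F : IntermediateField ℚ ℝ}

/-- The value of a unit of the ring of integers of a subfield of `ℝ`, as a real number; it replaces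
three nested coercions. -/
noncomputable def unitValue (F : IntermediateField ℚ ℝ) : (𝓞 F)ˣ →* ℝ :=
  ((algebraMap F ℝ).comp (algebraMap (𝓞 F) F)).toMonoidHom.comp (Units.coeHom (𝓞 F))

theorem unitValue_apply (u : (𝓞 F)ˣ) : unitValue F u = ((u : 𝓞 F) : F) := rfl

theorem unitValue_injective : Function.Injective (unitValue F) := fun _ _ h =>
  Units.ext (RingOfIntegers.ext (Subtype.ext h))

theorem unitValue_mem (u : (𝓞 F)ˣ) : unitValue F u ∈ F := ((u : 𝓞 F) : F).2

theorem unitValue_ne_zero (u : (𝓞 F)ˣ) : unitValue F u ≠ 0 :=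
  (u.isUnit.map ((algebraMap F ℝ).comp (algebraMap (𝓞 F) F))).ne_zero

theorem unitValue_neg (u : (𝓞 F)ˣ) : unitValue F (-u) = -unitValue F u := by
  simp [unitValue_apply]

theorem isIntegral_unitValue (u : (𝓞 F)ˣ) : IsIntegral ℤ (unitValue F u) :=
  map_isIntegral_int (algebraMap F ℝ) (RingOfIntegers.isIntegral_coe (u : 𝓞 F))

/-- The units of the ring of integers of a subfield of `ℝ` that are positive as real numbers. -/
def positiveUnits (F : IntermediateField ℚ ℝ) : Subgroup (𝓞 F)ˣ where
  carrier := {u | 0 < unitValue F u}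
  one_mem' := by simp
  mul_mem' hu hv := by rw [Set.mem_ofPred, map_mul]; exact mul_pos hu hv
  inv_mem' {u} hu := by
    have h : unitValue F u * unitValue F u⁻¹ = 1 := by rw [← map_mul, mul_inv_cancel, map_one]
    exact (pos_iff_pos_of_mul_pos (h ▸ one_pos)).mp hu

theorem mem_positiveUnits {u : (𝓞 F)ˣ} : u ∈ positiveUnits F ↔ 0 < unitValue F u := Iff.rfl

theorem mem_positiveUnits_or_neg_mem (u : (𝓞 F)ˣ) : u ∈ positiveUnits F ∨ -u ∈ positiveUnits F := by
  simp only [mem_positiveUnits, unitValue_neg, neg_pos]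
  exact (unitValue_ne_zero u).symm.lt_or_gt

theorem not_isOfFinOrder_of_mem_positiveUnits {u : (𝓞 F)ˣ} (hu : u ∈ positiveUnits F)
    (h1 : u ≠ 1) : ¬ IsOfFinOrder u := fun hfin => by
  obtain ⟨n, hn, hun⟩ := isOfFinOrder_iff_pow_eq_one.mp hfin
  refine h1 (unitValue_injective ?_)
  rw [map_one, ← pow_eq_one_iff_of_nonneg (mem_positiveUnits.mp hu).le hn.ne', ← map_pow, hun,
    map_one]

theorem exists_unit_sq_eq {K : Type*} [Field K] {w : (𝓞 K)ˣ} {x : K}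
    (h : x ^ 2 = ((w : 𝓞 K) : K)) : ∃ u : (𝓞 K)ˣ, u ^ 2 = w := by
  have hx : IsIntegral ℤ x := .of_pow two_pos (h ▸ RingOfIntegers.isIntegral_coe (w : 𝓞 K))
  let y : 𝓞 K := ⟨x, hx⟩
  have hsq : y ^ 2 = w := RingOfIntegers.ext h
  obtain ⟨u, hu⟩ := (isUnit_pow_iff two_ne_zero).mp (hsq ▸ w.isUnit)
  exact ⟨u, Units.ext (by rw [Units.val_pow_eq_pow_val, hu, hsq])⟩

end RealUnits

section PellUnits

variable {p : ℕ} {F : IntermediateField ℚ ℝ}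

/-- `√p` as an integer of a subfield of `ℝ` containing it. -/
noncomputable def sqrtInteger (hF : √(p : ℝ) ∈ F) : 𝓞 F :=
  ⟨⟨√(p : ℝ), hF⟩,
    (isIntegral_algebraMap_iff (algebraMap F ℝ).injective).mp (isIntegral_sqrt_natCast p)⟩

theorem coe_sqrtInteger (hF : √(p : ℝ) ∈ F) : ((sqrtInteger hF : F) : ℝ) = √(p : ℝ) := rfl

/-- The inclusion of `ℤ√p` into the ring of integers of a subfield of `ℝ` containing `√p`. -/
noncomputable def zsqrtdToIntegers (hF : √(p : ℝ) ∈ F) : ℤ√(p : ℤ) →+* 𝓞 F :=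
  Zsqrtd.lift ⟨sqrtInteger hF, RingOfIntegers.ext (Subtype.ext (by simp [coe_sqrtInteger]))⟩

theorem coe_zsqrtdToIntegers (hF : √(p : ℝ) ∈ F) (z : ℤ√(p : ℤ)) :
    ((zsqrtdToIntegers hF z : F) : ℝ) = zsqrtdToReal p z := by
  simp [zsqrtdToIntegers, zsqrtdToReal_apply, coe_sqrtInteger]

/-- The units of the ring of integers of a subfield of `ℝ` containing `√p` that come from
solutions of the Pell equation `x² - p y² = 1`. -/
noncomputable def pellUnits (hF : √(p : ℝ) ∈ F) : Pell.Solution₁ (p : ℤ) →* (𝓞 F)ˣ :=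
  (Units.map (zsqrtdToIntegers hF).toMonoidHom).comp Unitary.toUnits

theorem unitValue_pellUnits (hF : √(p : ℝ) ∈ F) (g : Pell.Solution₁ (p : ℤ)) :
    unitValue F (pellUnits hF g) = zsqrtdToReal p g :=
  coe_zsqrtdToIntegers hF g

theorem exists_isUnit_zsqrtd_of_unitValue_mem (hp : p.Prime) (h4 : p % 4 = 3) {u : (𝓞 F)ˣ}
    (hu : unitValue F u ∈ ℚ⟮√(p : ℝ)⟯) : ∃ z, IsUnit z ∧ zsqrtdToReal p z = unitValue F u := by
  have hinv : unitValue F u * unitValue F u⁻¹ = 1 := by rw [← map_mul, mul_inv_cancel, map_one]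
  obtain ⟨z, hz⟩ := exists_zsqrtd_of_isIntegral hp h4 hu (isIntegral_unitValue u)
  obtain ⟨z', hz'⟩ := exists_zsqrtd_of_isIntegral hp h4
    (by rw [eq_inv_of_mul_eq_one_right hinv]; exact inv_mem hu) (isIntegral_unitValue u⁻¹)
  exact ⟨z, .of_mul_eq_one z' (zsqrtdToReal_injective hp (by rw [map_mul, hz, hz', hinv, map_one])),
    hz⟩

theorem exists_zpow_pellUnits_of_mem_positiveUnits (hp : p.Prime) (h4 : p % 4 = 3)
    (hF : √(p : ℝ) ∈ F) {f : Pell.Solution₁ (p : ℤ)} (hf : Pell.IsFundamental f) {u : (𝓞 F)ˣ}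
    (hu : unitValue F u ∈ ℚ⟮√(p : ℝ)⟯) (hpos : u ∈ positiveUnits F) :
    ∃ n : ℤ, u = pellUnits hF f ^ n := by
  obtain ⟨z, hz, hzu⟩ := exists_isUnit_zsqrtd_of_unitValue_mem hp h4 hu
  obtain ⟨n, rfl⟩ := exists_zpow_fundamental_of_isUnit hp h4 hf hz (hzu ▸ hpos)
  exact ⟨n, unitValue_injective (by rw [← map_zpow, unitValue_pellUnits, hzu])⟩

theorem exists_eq_zpow_or_neg_zpow_pellUnits (hp : p.Prime) (h4 : p % 4 = 3) (hF : √(p : ℝ) ∈ F)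
    {f : Pell.Solution₁ (p : ℤ)} (hf : Pell.IsFundamental f) {u : (𝓞 F)ˣ}
    (hu : unitValue F u ∈ ℚ⟮√(p : ℝ)⟯) :
    ∃ n : ℤ, u = pellUnits hF f ^ n ∨ u = -pellUnits hF f ^ n := by
  rcases mem_positiveUnits_or_neg_mem u with h | h
  · obtain ⟨n, hn⟩ := exists_zpow_pellUnits_of_mem_positiveUnits hp h4 hF hf hu h
    exact ⟨n, .inl hn⟩
  · obtain ⟨n, hn⟩ := exists_zpow_pellUnits_of_mem_positiveUnits hp h4 hF hf
      (by rw [unitValue_neg]; exact neg_mem hu) h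
    exact ⟨n, .inr (neg_eq_iff_eq_neg.mp hn)⟩

end PellUnits

section QuarticField

variable {p : ℕ}

/-- The field `ℚ(√(2√p)) ⊂ ℝ`. -/
noncomputable abbrev quarticField (p : ℕ) : IntermediateField ℚ ℝ := ℚ⟮√(2 * √(p : ℝ))⟯

/-- The generator `θ = √(2√p)` of `quarticField p`. -/
noncomputable def quarticRoot (p : ℕ) : quarticField p := AdjoinSimple.gen ℚ √(2 * √(p : ℝ))

theorem coe_quarticRoot_pos (hp : p.Prime) : 0 < (quarticRoot p : ℝ) :=
  Real.sqrt_pos.mpr (mul_pos two_pos (Real.sqrt_pos.mpr (Nat.cast_pos.mpr hp.pos)))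

theorem coe_quarticRoot_sq (p : ℕ) : (quarticRoot p : ℝ) ^ 2 = 2 * √(p : ℝ) :=
  Real.sq_sqrt (by positivity)

theorem sqrt_mem_quarticField (p : ℕ) : √(p : ℝ) ∈ quarticField p := by
  have h : √(p : ℝ) = (quarticRoot p : ℝ) ^ 2 / 2 := by rw [coe_quarticRoot_sq]; ring
  rw [h]
  exact div_mem (pow_mem (quarticRoot p).2 2) (_root_.ofNat_mem _ 2)

theorem algHom_quarticField_ext {L : Type*} [Semiring L] [Algebra ℚ L]
    {φ ψ : quarticField p →ₐ[ℚ] L} (h : φ (quarticRoot p) = ψ (quarticRoot p)) : φ = ψ := by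
  refine adjoin_algHom_ext ℚ fun x hx => ?_
  obtain rfl := Set.mem_singleton_iff.mp hx
  exact h

theorem exists_add_mul_quarticRoot (x : quarticField p) :
    ∃ A B : quarticField p, (A : ℝ) ∈ ℚ⟮√(p : ℝ)⟯ ∧ (B : ℝ) ∈ ℚ⟮√(p : ℝ)⟯ ∧
      x = A + B * quarticRoot p := by
  have hk : ℚ⟮√(p : ℝ)⟯ ≤ quarticField p := adjoin_simple_le_iff.mpr (sqrt_mem_quarticField p)
  have h2 : √(2 * √(p : ℝ)) ^ 2 ∈ ℚ⟮√(p : ℝ)⟯ := by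
    rw [Real.sq_sqrt (by positivity)]
    exact mul_mem (_root_.ofNat_mem _ 2) (mem_adjoin_simple_self ℚ _)
  have hint : IsIntegral ℤ √(2 * √(p : ℝ)) := .of_pow two_pos (by
    rw [Real.sq_sqrt (by positivity)]
    have h := isIntegral_zsqrtdToReal (p := p) (2 * Zsqrtd.sqrtd)
    rwa [map_mul, map_ofNat, zsqrtdToReal_sqrtd] at h)
  obtain ⟨A, hA, B, hB, hx⟩ := exists_add_mul_of_mem_adjoin_simple hint.tower_top.isAlgebraic h2 x.2
  exact ⟨⟨A, hk hA⟩, ⟨B, hk hB⟩, hA, hB, Subtype.ext hx⟩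

variable {σ : quarticField p ≃ₐ[ℚ] quarticField p}

theorem apply_quarticRoot_of_fixes_sqrt (hσ : σ ≠ AlgEquiv.refl)
    (hσk : ∀ x : quarticField p, (x : ℝ) ∈ ℚ⟮√(p : ℝ)⟯ → σ x = x) :
    σ (quarticRoot p) = -quarticRoot p := by
  have hsq : σ (quarticRoot p) ^ 2 = quarticRoot p ^ 2 := by
    rw [← map_pow]
    refine hσk _ ?_
    rw [SubmonoidClass.coe_pow, coe_quarticRoot_sq]
    exact mul_mem (_root_.ofNat_mem _ 2) (mem_adjoin_simple_self ℚ _)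
  refine (sq_eq_sq_iff_eq_or_eq_neg.mp hsq).resolve_left fun h => hσ ?_
  have hσ' : (σ : quarticField p →ₐ[ℚ] quarticField p) = AlgHom.id ℚ _ := algHom_quarticField_ext h
  exact AlgEquiv.ext fun x => DFunLike.congr_fun hσ' x

theorem apply_apply_quarticField (hσ : σ (quarticRoot p) = -quarticRoot p) (x : quarticField p) :
    σ (σ x) = x := by
  have h : (σ : quarticField p →ₐ[ℚ] quarticField p).comp σ = AlgHom.id ℚ _ :=
    algHom_quarticField_ext (by simp [hσ])
  exact DFunLike.congr_fun h x

theorem apply_eq_self_of_mem_adjoin_sqrt (hσ : σ (quarticRoot p) = -quarticRoot p)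
    {x : quarticField p} (hx : (x : ℝ) ∈ ℚ⟮√(p : ℝ)⟯) : σ x = x := by
  obtain ⟨a, b, hab⟩ := exists_rat_add_rat_mul_sqrt hx
  have hθ : x = a + b * (quarticRoot p ^ 2 / 2) := Subtype.ext (by
    change (x : ℝ) = a + b * ((quarticRoot p : ℝ) ^ 2 / 2)
    rw [hab, coe_quarticRoot_sq, mul_div_cancel_left₀ _ two_ne_zero])
  rw [hθ]
  simp only [map_add, map_mul, map_div₀, map_pow, hσ, map_ratCast, map_ofNat, neg_sq]

theorem exists_conj_quarticField (hσ : σ (quarticRoot p) = -quarticRoot p) (x : quarticField p) :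
    ∃ A ∈ ℚ⟮√(p : ℝ)⟯, ∃ B ∈ ℚ⟮√(p : ℝ)⟯, (x : ℝ) = A + B * √(2 * √(p : ℝ)) ∧
      (σ x : ℝ) = A - B * √(2 * √(p : ℝ)) := by
  obtain ⟨A, B, hA, hB, rfl⟩ := exists_add_mul_quarticRoot x
  refine ⟨A, hA, B, hB, rfl, ?_⟩
  rw [map_add, map_mul, apply_eq_self_of_mem_adjoin_sqrt hσ hA,
    apply_eq_self_of_mem_adjoin_sqrt hσ hB, hσ, mul_neg, ← sub_eq_add_neg]
  rfl

theorem ringHom_quarticField_eq (hσ : σ (quarticRoot p) = -quarticRoot p)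
    (φ : quarticField p →+* ℝ) : (∀ x, φ x = x) ∨ ∀ x, φ x = σ x := by
  have h4 : φ (quarticRoot p) ^ 4 = (quarticRoot p : ℝ) ^ 4 := by
    have hθ : quarticRoot p ^ 4 = (4 * p : ℕ) := Subtype.ext (by
      change (quarticRoot p : ℝ) ^ (2 * 2) = (4 * p : ℕ)
      rw [pow_mul, coe_quarticRoot_sq, mul_pow, Real.sq_sqrt p.cast_nonneg]
      push_cast
      ring)
    rw [← map_pow, ← SubmonoidClass.coe_pow, hθ, map_natCast]
    rfl
  let φ' : quarticField p →ₐ[ℚ] ℝ := φ.toRatAlgHom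
  rcases (pow_eq_pow_iff_of_ne_zero four_ne_zero).mp h4 with h | ⟨h, -⟩
  · have hφ : φ' = (quarticField p).val := algHom_quarticField_ext h
    exact .inl (DFunLike.congr_fun hφ)
  · have hφ : φ' = (quarticField p).val.comp (σ : quarticField p →ₐ[ℚ] quarticField p) :=
      algHom_quarticField_ext (by
        change φ _ = (σ (quarticRoot p) : ℝ)
        rw [h, hσ]
        rfl)
    exact .inr (DFunLike.congr_fun hφ)

end QuarticField

/-- The action of a field automorphism on the units of the ring of integers. -/
noncomputable abbrev conjUnits {K : Type*} [Field K] [Algebra ℚ K] (σ : K ≃ₐ[ℚ] K) :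
    (𝓞 K)ˣ →* (𝓞 K)ˣ :=
  Units.map (RingOfIntegers.mapRingHom σ).toMonoidHom

section RelativeNorm

variable {p : ℕ} {σ : quarticField p ≃ₐ[ℚ] quarticField p}

theorem exists_eq_mul_sqrtd_mul_sq (hp : p.Prime) (h4 : p % 4 = 3) {ε π δ : ℤ√(p : ℤ)}
    (hε : IsUnit ε) (hπ : π ^ 2 = 2 * ε) {D : ℝ} (hD : D ∈ ℚ⟮√(p : ℝ)⟯)
    (h : zsqrtdToReal p δ = 2 * √(p : ℝ) * D ^ 2) : ∃ β, δ = ε * Zsqrtd.sqrtd * β ^ 2 := by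
  have := isDedekindDomain_zsqrtd_prime hp h4
  have hsq : (D * zsqrtdToReal p π * √(p : ℝ)) ^ 2 = zsqrtdToReal p (Zsqrtd.sqrtd * (ε * δ)) := by
    rw [mul_pow, mul_pow, ← map_pow, hπ, map_mul, map_mul, map_mul, map_ofNat, h,
      zsqrtdToReal_sqrtd]
    ring
  obtain ⟨γ, hγ⟩ := exists_zsqrtd_of_isIntegral hp h4
    (mul_mem (mul_mem hD (zsqrtdToReal_mem π)) (mem_adjoin_simple_self ℚ _))
    (.of_pow two_pos (hsq ▸ isIntegral_zsqrtdToReal _))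
  rw [← hγ, ← map_pow] at hsq
  have hγsq : γ ^ 2 = Zsqrtd.sqrtd * (ε * δ) := zsqrtdToReal_injective hp hsq
  obtain ⟨β, rfl⟩ := (prime_sqrtd hp).dvd_of_dvd_pow ⟨_, hγsq⟩
  obtain ⟨e, he⟩ := hε.exists_right_inv
  have hδ : Zsqrtd.sqrtd * β ^ 2 = ε * δ :=
    mul_left_cancel₀ (prime_sqrtd hp).ne_zero (by rw [← hγsq]; ring)
  exact ⟨e * β, by linear_combination (-e * Zsqrtd.sqrtd * β ^ 2 - δ) * he - e * hδ⟩

theorem exists_trace_norm (hp : p.Prime) (h4 : p % 4 = 3)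
    (hσ : σ (quarticRoot p) = -quarticRoot p) {ε π : ℤ√(p : ℤ)} (hε : IsUnit ε)
    (hπ : π ^ 2 = 2 * ε) (u : (𝓞 (quarticField p))ˣ) :
    ∃ t n β : ℤ√(p : ℤ), zsqrtdToReal p t = unitValue _ u + unitValue _ (conjUnits σ u) ∧
      zsqrtdToReal p n = unitValue _ (u * conjUnits σ u) ∧
      t ^ 2 - 4 * n = ε * Zsqrtd.sqrtd * β ^ 2 := by
  have h2 : (2 : ℝ) ∈ ℚ⟮√(p : ℝ)⟯ := _root_.ofNat_mem _ 2
  have hθ : √(2 * √(p : ℝ)) ^ 2 = 2 * √(p : ℝ) := coe_quarticRoot_sq p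
  obtain ⟨A, hA, B, hB, hu, hσu⟩ :=
    exists_conj_quarticField hσ ((u : 𝓞 (quarticField p)) : quarticField p)
  rw [← unitValue_apply] at hu
  replace hσu : unitValue _ (conjUnits σ u) = A - B * √(2 * √(p : ℝ)) := hσu
  have htrace : unitValue _ u + unitValue _ (conjUnits σ u) = 2 * A := by rw [hu, hσu]; ring
  have hnorm : unitValue _ (u * conjUnits σ u) = A ^ 2 - 2 * √(p : ℝ) * B ^ 2 := by
    rw [map_mul, hu, hσu]
    linear_combination (-B ^ 2) * hθ
  obtain ⟨t, ht⟩ := exists_zsqrtd_of_isIntegral hp h4 (htrace ▸ mul_mem h2 hA)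
    ((isIntegral_unitValue u).add (isIntegral_unitValue _))
  obtain ⟨n, hn⟩ := exists_zsqrtd_of_isIntegral hp h4
    (hnorm ▸ sub_mem (pow_mem hA 2) (mul_mem (mul_mem h2 (mem_adjoin_simple_self ℚ _))
      (pow_mem hB 2))) (isIntegral_unitValue _)
  obtain ⟨β, hβ⟩ := exists_eq_mul_sqrtd_mul_sq hp h4 hε hπ (δ := t ^ 2 - 4 * n) (mul_mem h2 hB) (by
    rw [map_sub, map_mul, map_pow, map_ofNat, ht, hn, htrace, hnorm]
    ring)
  exact ⟨t, n, β, ht, hn, hβ⟩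

theorem star_sq_le_four_mul_star {ε t n β : ℤ√(p : ℤ)} (hε : ε.norm = 1)
    (hpos : 0 < zsqrtdToReal p ε) (h : t ^ 2 - 4 * n = ε * Zsqrtd.sqrtd * β ^ 2) :
    zsqrtdToReal p (star t) ^ 2 ≤ 4 * zsqrtdToReal p (star n) := by
  have hstar := congrArg (fun z => zsqrtdToReal p (star z)) h
  simp only [star_sub, star_mul, star_pow, map_sub, map_mul, map_pow, star_ofNat, map_ofNat,
    zsqrtdToReal_star_sqrtd] at hstar
  have hεpos := zsqrtdToReal_star_pos hε hpos
  have hdisc : 0 ≤ zsqrtdToReal p (star β) ^ 2 * (√(p : ℝ) * zsqrtdToReal p (star ε)) := by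
    positivity
  linarith

theorem exists_relNorm_eq_zpow (hp : p.Prime) (h4 : p % 4 = 3)
    (hσ : σ (quarticRoot p) = -quarticRoot p) {f : Pell.Solution₁ (p : ℤ)}
    (hf : Pell.IsFundamental f) {π : ℤ√(p : ℤ)} (hπ : π ^ 2 = 2 * f)
    (u : (𝓞 (quarticField p))ˣ) :
    ∃ n : ℤ, u * conjUnits σ u = pellUnits (sqrt_mem_quarticField p) f ^ n := by
  obtain ⟨t, n, β, -, hn, hdisc⟩ := exists_trace_norm hp h4 hσ (isUnit_pellSolution f) hπ u
  have hmem : unitValue _ (u * conjUnits σ u) ∈ ℚ⟮√(p : ℝ)⟯ := hn ▸ zsqrtdToReal_mem n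
  obtain ⟨n', hn'unit, hn'⟩ := exists_isUnit_zsqrtd_of_unitValue_mem hp h4 hmem
  obtain rfl : n = n' := zsqrtdToReal_injective hp (hn.trans hn'.symm)
  have hstar := star_sq_le_four_mul_star
    (zsqrtd_norm_eq_one_of_isUnit hp h4 (isUnit_pellSolution f))
    (one_pos.trans (one_lt_zsqrtdToReal_fundamental hf)) hdisc
  have hmul := zsqrtdToReal_mul_star n
  rw [zsqrtd_norm_eq_one_of_isUnit hp h4 hn'unit, Int.cast_one] at hmul
  have hpos : 0 < zsqrtdToReal p n :=
    pos_of_mul_pos_left (hmul ▸ one_pos) (by linarith [sq_nonneg (zsqrtdToReal p (star t))])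
  exact exists_zpow_pellUnits_of_mem_positiveUnits hp h4 _ hf hmem
    (mem_positiveUnits.mpr (hn ▸ hpos))

end RelativeNorm

theorem isCyclic_of_forall_one_lt_le {G : Type*} [Group G] {v : G →* ℝ}
    (hv : Function.Injective v) {H : Subgroup G} (hpos : ∀ g ∈ H, 0 < v g) {a : ℝ} (ha : 1 < a)
    (hgap : ∀ g ∈ H, 1 < v g → a ≤ v g) : IsCyclic H := by
  let L : H →* {x : ℝ // 0 < x} :=
    { toFun g := ⟨v g, hpos g g.2⟩
      map_one' := Subtype.ext (map_one v)
      map_mul' _ _ := Subtype.ext (map_mul v _ _) }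
  have : MulArchimedean {x : ℝ // 0 < x} := ⟨fun x _ hy =>
    let ⟨n, hn⟩ := pow_unbounded_of_one_lt (x : ℝ) hy
    ⟨n, hn.le⟩⟩
  have hdisj : Disjoint (L.range : Set {x : ℝ // 0 < x}) (Set.Ioo 1 ⟨a, one_pos.trans ha⟩) := by
    rw [Set.disjoint_left]
    rintro _ ⟨g, rfl⟩ ⟨h1, h2⟩
    exact (hgap g g.2 h1).not_gt h2
  have ha' : (1 : {x : ℝ // 0 < x}) < ⟨a, one_pos.trans ha⟩ := ha
  obtain ⟨b, hb⟩ := Subgroup.cyclic_of_isolated_one ha' hdisj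
  have : IsCyclic L.range := (Subgroup.isCyclic_iff_exists_zpowers_eq_top _).mpr
    ⟨b, (Subgroup.zpowers_eq_closure b).trans hb.symm⟩
  exact isCyclic_of_injective L.rangeRestrict fun g g' h =>
    Subtype.ext (hv (congrArg (fun x : L.range => ((x : {x : ℝ // 0 < x}) : ℝ)) h))

section RelNormOne

variable {p : ℕ} {σ : quarticField p ≃ₐ[ℚ] quarticField p} {ε π : ℤ√(p : ℤ)}
  {u : (𝓞 (quarticField p))ˣ}

/-- The positive units `u` with `u · σ u = 1`: for an involution `σ`, those of relative norm `1`
over the field fixed by `σ`. -/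
noncomputable def relNormOneUnits {F : IntermediateField ℚ ℝ} (σ : F ≃ₐ[ℚ] F) :
    Subgroup (𝓞 F)ˣ :=
  positiveUnits F ⊓ (MonoidHom.id _ * conjUnits σ).ker

theorem mem_relNormOneUnits {F : IntermediateField ℚ ℝ} {σ : F ≃ₐ[ℚ] F} {u : (𝓞 F)ˣ} :
    u ∈ relNormOneUnits σ ↔ u ∈ positiveUnits F ∧ u * conjUnits σ u = 1 := Iff.rfl

theorem unitValue_mul_conj_eq_one {F : IntermediateField ℚ ℝ} {σ : F ≃ₐ[ℚ] F} {u : (𝓞 F)ˣ}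
    (hu : u ∈ relNormOneUnits σ) : unitValue F u * unitValue F (conjUnits σ u) = 1 := by
  rw [← map_mul, (mem_relNormOneUnits.mp hu).2, map_one]

theorem exists_trace_of_mem_relNormOneUnits (hp : p.Prime) (h4 : p % 4 = 3)
    (hσ : σ (quarticRoot p) = -quarticRoot p) (hε : IsUnit ε) (hpos : 0 < zsqrtdToReal p ε)
    (hπ : π ^ 2 = 2 * ε) (hu : u ∈ relNormOneUnits σ) :
    ∃ t β : ℤ√(p : ℤ), zsqrtdToReal p t = unitValue _ u + unitValue _ (conjUnits σ u) ∧
      t ^ 2 - 4 = ε * Zsqrtd.sqrtd * β ^ 2 ∧ |zsqrtdToReal p (star t)| ≤ 2 := by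
  obtain ⟨t, n, β, ht, hn, hdisc⟩ := exists_trace_norm hp h4 hσ hε hπ u
  rw [(mem_relNormOneUnits.mp hu).2, map_one, map_eq_one_iff _ (zsqrtdToReal_injective hp)] at hn
  have hstar := star_sq_le_four_mul_star (zsqrtd_norm_eq_one_of_isUnit hp h4 hε) hpos hdisc
  rw [hn, star_one, map_one] at hstar
  exact ⟨t, β, ht, by rw [← hdisc, hn, mul_one], abs_le_of_sq_le_sq (by linarith) two_pos.le⟩

theorem three_halves_le_of_mem_relNormOneUnits (hp : p.Prime) (h4 : p % 4 = 3)
    (hσ : σ (quarticRoot p) = -quarticRoot p) (hε : IsUnit ε) (hpos : 0 < zsqrtdToReal p ε)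
    (hπ : π ^ 2 = 2 * ε) (hu : u ∈ relNormOneUnits σ) (h1 : 1 < unitValue _ u) :
    3 / 2 ≤ unitValue _ u := by
  obtain ⟨t, β, ht, -, hstar⟩ := exists_trace_of_mem_relNormOneUnits hp h4 hσ hε hpos hπ hu
  have hmul := unitValue_mul_conj_eq_one hu
  set x := unitValue _ u
  set y := unitValue _ (conjUnits σ u)
  have htrace : 0 < zsqrtdToReal p (t - 2) := by
    rw [map_sub, ht, map_ofNat]
    nlinarith
  have hnorm : (1 : ℝ) ≤ |zsqrtdToReal p (t - 2) * zsqrtdToReal p (star (t - 2))| := by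
    rw [zsqrtdToReal_mul_star]
    exact_mod_cast Int.one_le_abs (zsqrtd_norm_ne_zero hp fun h => by simp [h] at htrace)
  have hconj : |zsqrtdToReal p (star (t - 2))| ≤ 4 := by
    rw [star_sub, star_ofNat, map_sub, map_ofNat]
    exact (abs_sub _ _).trans (by rw [abs_two]; linarith)
  have hquarter : 1 / 4 ≤ zsqrtdToReal p (t - 2) := by
    rw [abs_mul, abs_of_pos htrace] at hnorm
    nlinarith
  rw [map_sub, ht, map_ofNat] at hquarter
  nlinarith

theorem isCyclic_relNormOneUnits (hp : p.Prime) (h4 : p % 4 = 3)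
    (hσ : σ (quarticRoot p) = -quarticRoot p) (hε : IsUnit ε) (hpos : 0 < zsqrtdToReal p ε)
    (hπ : π ^ 2 = 2 * ε) : IsCyclic (relNormOneUnits σ) :=
  isCyclic_of_forall_one_lt_le unitValue_injective (fun _ hu => (mem_relNormOneUnits.mp hu).1)
    (by norm_num) fun _ hu => three_halves_le_of_mem_relNormOneUnits hp h4 hσ hε hpos hπ hu

theorem exists_sq_eq_trace_add_two_mul (hp : p.Prime) (h8 : p % 8 = 7)
    (hσ : σ (quarticRoot p) = -quarticRoot p) (hε : IsUnit ε) (hpos : 0 < zsqrtdToReal p ε)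
    (hπ : π ^ 2 = 2 * ε) (hu : u ∈ relNormOneUnits σ) :
    ∃ c v : ℤ√(p : ℤ), IsUnit v ∧ 0 < zsqrtdToReal p v ∧ zsqrtdToReal p c ^ 2 =
      (unitValue _ u + unitValue _ (conjUnits σ u) + 2) * zsqrtdToReal p v := by
  obtain ⟨t, β, ht, hdisc, hstar⟩ :=
    exists_trace_of_mem_relNormOneUnits hp (by omega) hσ hε hpos hπ hu
  have hupos : 0 < unitValue _ u := hu.1
  have hmul := unitValue_mul_conj_eq_one hu
  have htrace : zsqrtdToReal p (t + 2) = unitValue _ u + unitValue _ (conjUnits σ u) + 2 := by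
    rw [map_add, ht, map_ofNat]
  have htpos : 0 < zsqrtdToReal p (t + 2) := by
    rw [htrace]
    nlinarith
  have hnorm : 0 < (t + 2).norm := by
    refine lt_of_le_of_ne ?_ (zsqrtd_norm_ne_zero hp fun h => by simp [h] at htpos).symm
    have h : (0 : ℝ) ≤ (t + 2).norm := by
      rw [← zsqrtdToReal_mul_star, star_add, star_ofNat, map_add _ (star t), map_ofNat]
      exact mul_nonneg htpos.le (by linarith [neg_le_of_abs_le hstar])
    exact_mod_cast h
  obtain ⟨c, v, hv⟩ := exists_associated_sq_add_two hp h8 hπ hε hdisc hnorm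
  have hcv : zsqrtdToReal p (t + 2) * zsqrtdToReal p v = zsqrtdToReal p c ^ 2 := by
    rw [← map_mul, hv, map_pow]
  refine ⟨c, v, v.isUnit, lt_of_le_of_ne ?_ (v.isUnit.map (zsqrtdToReal p)).ne_zero.symm,
    htrace ▸ hcv.symm⟩
  exact nonneg_of_mul_nonneg_right (hcv ▸ sq_nonneg _) htpos

theorem exists_sq_eq_mul_zpow_of_mem_relNormOneUnits (hp : p.Prime) (h8 : p % 8 = 7)
    (hσ : σ (quarticRoot p) = -quarticRoot p) {f : Pell.Solution₁ (p : ℤ)}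
    (hf : Pell.IsFundamental f) (hπ : π ^ 2 = 2 * f) (hu : u ∈ relNormOneUnits σ) :
    ∃ w ∈ positiveUnits (quarticField p), ∃ j : ℤ,
      w ^ 2 = u * pellUnits (sqrt_mem_quarticField p) f ^ j := by
  obtain ⟨c, v, hv, hvpos, hc⟩ := exists_sq_eq_trace_add_two_mul hp h8 hσ (isUnit_pellSolution f)
    (one_pos.trans (one_lt_zsqrtdToReal_fundamental hf)) hπ hu
  obtain ⟨j, rfl⟩ := exists_zpow_fundamental_of_isUnit hp (by omega) hf hv hvpos
  have hupos : 0 < unitValue _ u := hu.1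
  have hmul := unitValue_mul_conj_eq_one hu
  let c' : quarticField p := zsqrtdToIntegers (sqrt_mem_quarticField p) c
  let x : quarticField p := c' * ((u : 𝓞 (quarticField p)) / (1 + (u : 𝓞 (quarticField p))))
  have hx : x ^ 2 = ((u * pellUnits (sqrt_mem_quarticField p) f ^ j : (𝓞 (quarticField p))ˣ) :
      𝓞 (quarticField p)) := Subtype.ext (by
    change ((c' : ℝ) * (unitValue _ u / (1 + unitValue _ u))) ^ 2 = unitValue _ (u * _)
    rw [coe_zsqrtdToIntegers, mul_pow, hc, map_mul, ← map_zpow, unitValue_pellUnits]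
    field_simp
    linear_combination hmul)
  obtain ⟨w, hw⟩ := exists_unit_sq_eq hx
  rcases mem_positiveUnits_or_neg_mem w with h | h
  · exact ⟨w, h, j, hw⟩
  · exact ⟨-w, h, j, by rw [neg_sq, hw]⟩

theorem exists_abs_conj_lt_abs (hp : p.Prime) [NumberField (quarticField p)]
    (hσ : σ (quarticRoot p) = -quarticRoot p) :
    ∃ u : (𝓞 (quarticField p))ˣ, |unitValue _ (conjUnits σ u)| < |unitValue _ u| := by
  let place (φ : quarticField p →+* ℝ) : InfinitePlace (quarticField p) :=
    InfinitePlace.mk (Complex.ofRealHom.comp φ)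
  have place_apply (φ : quarticField p →+* ℝ) (x : quarticField p) : place φ x = |φ x| :=
    Complex.norm_real _
  let φ : quarticField p →+* ℝ := algebraMap (quarticField p) ℝ
  have hne : place (φ.comp (σ : quarticField p →+* quarticField p)) ≠ place φ := fun h => by
    have hθ := DFunLike.congr_fun h (1 + quarticRoot p)
    rw [place_apply, place_apply] at hθ
    change |((σ (1 + quarticRoot p) : quarticField p) : ℝ)| = |1 + (quarticRoot p : ℝ)| at hθ
    rw [map_add, map_one, hσ] at hθ
    change |1 + -(quarticRoot p : ℝ)| = |1 + (quarticRoot p : ℝ)| at hθ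
    rcases abs_eq_abs.mp hθ with h | h <;> linarith [coe_quarticRoot_pos hp]
  obtain ⟨u, hu⟩ := Units.dirichletUnitTheorem.exists_unit (quarticField p) (place φ)
  have hlt (w : InfinitePlace (quarticField p)) (hw : w ≠ place φ) :
      w (u : 𝓞 (quarticField p)) < 1 :=
    lt_of_not_ge fun h => (hu w hw).not_ge (Real.log_nonneg h)
  have hge := InfinitePlace.one_le_of_lt_one u.ne_zero fun w => hlt w
  have hconj := hlt _ hne
  rw [place_apply] at hge hconj
  exact ⟨u, hconj.trans_le hge⟩

theorem exists_mem_relNormOneUnits_ne_one (hp : p.Prime) [NumberField (quarticField p)]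
    (hσ : σ (quarticRoot p) = -quarticRoot p) : ∃ η ∈ relNormOneUnits σ, η ≠ 1 := by
  obtain ⟨u, hu⟩ := exists_abs_conj_lt_abs hp hσ
  have hinv : conjUnits σ (conjUnits σ u) = u :=
    unitValue_injective (congrArg Subtype.val (apply_apply_quarticField hσ _))
  refine ⟨(u / conjUnits σ u) ^ 2, mem_relNormOneUnits.mpr ⟨?_, ?_⟩, fun h => hu.ne' ?_⟩
  · rw [mem_positiveUnits, map_pow]
    exact sq_pos_of_ne_zero (unitValue_ne_zero _)
  · rw [map_pow, map_div, hinv, ← mul_pow, div_mul_div_cancel, div_self', one_pow]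
  · rw [div_pow, div_eq_one] at h
    rw [← sq_eq_sq_iff_abs_eq_abs, ← map_pow, h, map_pow]

end RelNormOne

section CyclicNorm

variable {G : Type*} [CommGroup G] {S : G →* G} {P : Subgroup G} {ε η u ξ : G}

theorem mul_apply_eq_zpow_of_sq_eq (hS : S ε = ε) (hε : ¬IsOfFinOrder ε)
    (hN : ∀ g ∈ P, ∃ n : ℤ, g * S g = ε ^ n) (hη : η * S η = 1) (hu : u ∈ P) {j : ℤ}
    (huj : u ^ 2 = η * ε ^ j) : u * S u = ε ^ j := by
  obtain ⟨n, hn⟩ := hN u hu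
  have hsq : ε ^ (n * 2) = ε ^ (j * 2) := by
    rw [zpow_mul, ← hn, zpow_mul, zpow_two, zpow_two, mul_mul_mul_comm, ← map_mul, ← sq, huj,
      map_mul, map_zpow, hS, mul_mul_mul_comm, hη, one_mul]
  rw [hn, mul_right_cancel₀ two_ne_zero (injective_zpow_iff_not_isOfFinOrder.mpr hε hsq)]

theorem exists_mul_apply_eq_of_sq_eq (hεP : ε ∈ P) (hS : S ε = ε) (hε : ¬IsOfFinOrder ε)
    (hN : ∀ g ∈ P, ∃ n : ℤ, g * S g = ε ^ n) (hη : η * S η = 1) (hηfin : ¬IsOfFinOrder η)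
    (hker : ∀ g ∈ P, g * S g = 1 → g ∈ Subgroup.zpowers η) (hu : u ∈ P) {j : ℤ}
    (huj : u ^ 2 = η * ε ^ j) : ∃ ξ ∈ P, ξ * S ξ = ε ∧ ξ ^ 2 = η * ε := by
  have hnorm := mul_apply_eq_zpow_of_sq_eq hS hε hN hη hu huj
  have hshift (i : ℤ) : u / ε ^ i ∈ P ∧ u / ε ^ i * S (u / ε ^ i) = ε ^ (j - 2 * i) ∧
      (u / ε ^ i) ^ 2 = η * ε ^ (j - 2 * i) := by
    refine ⟨div_mem hu (zpow_mem hεP i), ?_, ?_⟩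
    · rw [map_div, map_zpow, hS, div_mul_div_comm, hnorm, ← zpow_add, ← two_mul, zpow_sub,
        div_eq_mul_inv]
    · rw [div_pow, huj, mul_div_assoc, sq (ε ^ i), ← zpow_add, ← two_mul, zpow_sub, div_eq_mul_inv]
  obtain ⟨i, hi | hi⟩ := j.even_or_odd'
  · obtain ⟨hP, hone, hsq⟩ := hshift i
    rw [hi, sub_self, zpow_zero] at hone hsq
    obtain ⟨k, hk⟩ := Subgroup.mem_zpowers_iff.mp (hker _ hP hone)
    have hη1 : η ^ (k * 2) = η ^ (1 : ℤ) := by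
      rw [zpow_mul, hk, zpow_one, ← mul_one η, ← hsq]
      exact zpow_two _ |>.trans (sq _).symm
    have := injective_zpow_iff_not_isOfFinOrder.mpr hηfin hη1
    omega
  · obtain ⟨hP, hone, hsq⟩ := hshift i
    rw [hi, add_sub_cancel_left, zpow_one] at hone hsq
    exact ⟨_, hP, hone, hsq⟩

theorem le_closure_of_mul_apply_eq (hN : ∀ g ∈ P, ∃ n : ℤ, g * S g = ε ^ n)
    (hker : ∀ g ∈ P, g * S g = 1 → g ∈ Subgroup.zpowers η) (hξP : ξ ∈ P) (hξ : ξ * S ξ = ε)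
    (hsq : ξ ^ 2 = η * ε) : P ≤ Subgroup.closure {ξ, S ξ} := fun g hg => by
  have hξmem : ξ ∈ Subgroup.closure {ξ, S ξ} := Subgroup.subset_closure (by simp)
  have hSξmem : S ξ ∈ Subgroup.closure {ξ, S ξ} := Subgroup.subset_closure (by simp)
  have hη : η = ξ / S ξ := by
    rw [eq_div_iff_mul_eq', ← mul_right_inj ξ, ← sq, hsq, ← hξ]
    ac_rfl
  obtain ⟨r, hr⟩ := hN g hg
  have hone : g / ξ ^ r * S (g / ξ ^ r) = 1 := by
    rw [map_div, map_zpow, div_mul_div_comm, hr, ← mul_zpow, hξ, div_self']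
  obtain ⟨n, hn⟩ := Subgroup.mem_zpowers_iff.mp
    (hker _ (div_mem hg (zpow_mem hξP r)) hone)
  rw [← div_mul_cancel g (ξ ^ r), ← hn, hη]
  exact mul_mem (zpow_mem (div_mem hξmem hSξmem) n) (zpow_mem hξmem r)

end CyclicNorm

section Generators

variable {p : ℕ} {σ : quarticField p ≃ₐ[ℚ] quarticField p} {f : Pell.Solution₁ (p : ℤ)}

theorem conjUnits_pellUnits (hσ : σ (quarticRoot p) = -quarticRoot p) (g : Pell.Solution₁ (p : ℤ)) :
    conjUnits σ (pellUnits (sqrt_mem_quarticField p) g) =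
      pellUnits (sqrt_mem_quarticField p) g := by
  refine unitValue_injective (congrArg Subtype.val (apply_eq_self_of_mem_adjoin_sqrt hσ ?_))
  rw [← unitValue_apply, unitValue_pellUnits]
  exact zsqrtdToReal_mem _

theorem pellUnits_mem_positiveUnits_of_isFundamental {F : IntermediateField ℚ ℝ}
    (hF : √(p : ℝ) ∈ F) (hf : Pell.IsFundamental f) : pellUnits hF f ∈ positiveUnits F := by
  rw [mem_positiveUnits, unitValue_pellUnits]
  exact one_pos.trans (one_lt_zsqrtdToReal_fundamental hf)

theorem not_isOfFinOrder_pellUnits {F : IntermediateField ℚ ℝ}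
    (hF : √(p : ℝ) ∈ F) (hf : Pell.IsFundamental f) : ¬IsOfFinOrder (pellUnits hF f) :=
  not_isOfFinOrder_of_mem_positiveUnits (pellUnits_mem_positiveUnits_of_isFundamental hF hf)
    fun h => (one_lt_zsqrtdToReal_fundamental hf).ne' (by
      rw [← unitValue_pellUnits hF, h, map_one])

theorem exists_zpowers_eq_relNormOneUnits (hp : p.Prime) (h4 : p % 4 = 3)
    [NumberField (quarticField p)]
    (hσ : σ (quarticRoot p) = -quarticRoot p) {ε π : ℤ√(p : ℤ)} (hε : IsUnit ε)
    (hpos : 0 < zsqrtdToReal p ε) (hπ : π ^ 2 = 2 * ε) :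
    ∃ η, ¬IsOfFinOrder η ∧ Subgroup.zpowers η = relNormOneUnits σ := by
  obtain ⟨η, hη⟩ := (Subgroup.isCyclic_iff_exists_zpowers_eq_top _).mp
    (isCyclic_relNormOneUnits hp h4 hσ hε hpos hπ)
  refine ⟨η, not_isOfFinOrder_of_mem_positiveUnits
    (mem_relNormOneUnits.mp (hη ▸ Subgroup.mem_zpowers η)).1 ?_, hη⟩
  rintro rfl
  obtain ⟨η', hη', hne⟩ := exists_mem_relNormOneUnits_ne_one hp hσ
  rw [← hη, Subgroup.zpowers_one_eq_bot, Subgroup.mem_bot] at hη'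
  exact hne hη'

theorem exists_relNorm_eq_pellUnits (hp : p.Prime) (h8 : p % 8 = 7) [NumberField (quarticField p)]
    (hσ : σ (quarticRoot p) = -quarticRoot p) (hf : Pell.IsFundamental f) :
    ∃ ξ ∈ positiveUnits (quarticField p),
      ξ * conjUnits σ ξ = pellUnits (sqrt_mem_quarticField p) f ∧
      positiveUnits (quarticField p) ≤ Subgroup.closure {ξ, conjUnits σ ξ} := by
  have h4 : p % 4 = 3 := by omega
  obtain ⟨π, hπ⟩ := exists_sq_eq_two_mul_fundamental hp h4 hf
  obtain ⟨η, hηfin, hη⟩ := exists_zpowers_eq_relNormOneUnits hp h4 hσ (isUnit_pellSolution f)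
    (one_pos.trans (one_lt_zsqrtdToReal_fundamental hf)) hπ
  have hηmem : η ∈ relNormOneUnits σ := hη ▸ Subgroup.mem_zpowers η
  have hker : ∀ g ∈ positiveUnits _, g * conjUnits σ g = 1 → g ∈ Subgroup.zpowers η :=
    fun g hg h1 => hη ▸ mem_relNormOneUnits.mpr ⟨hg, h1⟩
  have hN : ∀ g ∈ positiveUnits _, ∃ n : ℤ,
      g * conjUnits σ g = pellUnits (sqrt_mem_quarticField p) f ^ n :=
    fun g _ => exists_relNorm_eq_zpow hp h4 hσ hf hπ g
  obtain ⟨u, hu, j, huj⟩ := exists_sq_eq_mul_zpow_of_mem_relNormOneUnits hp h8 hσ hf hπ hηmem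
  obtain ⟨ξ, hξpos, hξ, hsq⟩ := exists_mul_apply_eq_of_sq_eq
    (pellUnits_mem_positiveUnits_of_isFundamental _ hf) (conjUnits_pellUnits hσ f)
    (not_isOfFinOrder_pellUnits _ hf) hN (mem_relNormOneUnits.mp hηmem).2 hηfin hker hu huj
  exact ⟨ξ, hξpos, hξ, le_closure_of_mul_apply_eq hN hker hξpos hξ hsq⟩

theorem closure_neg_one_insert_eq_top {F : IntermediateField ℚ ℝ} {s : Set (𝓞 F)ˣ}
    (hs : positiveUnits F ≤ Subgroup.closure s) : Subgroup.closure (insert (-1) s) = ⊤ := by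
  have hle := hs.trans (Subgroup.closure_mono (Set.subset_insert (-1) s))
  have hneg : -1 ∈ Subgroup.closure (insert (-1) s) :=
    Subgroup.subset_closure (Set.mem_insert _ _)
  refine (Subgroup.eq_top_iff' _).mpr fun u => ?_
  rcases mem_positiveUnits_or_neg_mem u with hu | hu
  · exact hle hu
  · simpa only [neg_one_mul, neg_neg] using mul_mem hneg (hle hu)

theorem ringHom_pos_of_relNorm_mem_positiveUnits (hσ : σ (quarticRoot p) = -quarticRoot p)
    {u : (𝓞 (quarticField p))ˣ} (hu : u ∈ positiveUnits (quarticField p))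
    (hN : u * conjUnits σ u ∈ positiveUnits (quarticField p)) (φ : quarticField p →+* ℝ) :
    0 < φ (u : 𝓞 (quarticField p)) := by
  rcases ringHom_quarticField_eq hσ φ with h | h
  · rw [h]
    exact hu
  · rw [h]
    exact ((positiveUnits _).mul_mem_cancel_left hu).mp hN

end Generators

theorem exists_totally_positive_generating_unit_general
    (p : ℕ) (hp : p.Prime) (hmod : p % 8 = 7)
    (K' k : IntermediateField ℚ ℝ)
    (hK' : K' = ℚ⟮Real.sqrt (2 * Real.sqrt p)⟯)
    (hk : k = ℚ⟮Real.sqrt p⟯)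
    [NumberField K'] [NumberField k]
    (σ : K' ≃ₐ[ℚ] K')
    (hσ : σ ≠ AlgEquiv.refl)
    (hσk : ∀ x : K', (x : ℝ) ∈ k → σ x = x) :
    ∃ ξ : (𝓞 K')ˣ,
      (∀ φ : K' →+* ℝ, 0 < φ ((ξ : 𝓞 K') : K')) ∧
      Subgroup.closure
        ({-1, ξ, Units.map (RingOfIntegers.mapRingHom σ).toMonoidHom ξ} :
          Set (𝓞 K')ˣ) = ⊤ ∧
      ∃ ε : (𝓞 k)ˣ,
        ((((ξ * Units.map (RingOfIntegers.mapRingHom σ).toMonoidHom ξ : (𝓞 K')ˣ) :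
            𝓞 K') : K') : ℝ) = (((ε : 𝓞 k) : k) : ℝ) ∧
        1 < (((ε : 𝓞 k) : k) : ℝ) ∧
        ∀ u : (𝓞 k)ˣ, ∃ n : ℤ, u = ε ^ n ∨ u = -(ε ^ n) := by
  subst hK' hk
  have hσθ := apply_quarticRoot_of_fixes_sqrt hσ hσk
  have hk : √(p : ℝ) ∈ ℚ⟮√(p : ℝ)⟯ := mem_adjoin_simple_self ℚ _
  obtain ⟨f, hf⟩ := Pell.IsFundamental.exists_of_not_isSquare (Int.natCast_pos.mpr hp.pos)
    (Nat.prime_iff_prime_int.mp hp).not_isSquare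
  obtain ⟨ξ, hpos, hnorm, hgen⟩ := exists_relNorm_eq_pellUnits hp hmod hσθ hf
  refine ⟨ξ, ringHom_pos_of_relNorm_mem_positiveUnits hσθ hpos ?_,
    closure_neg_one_insert_eq_top hgen, pellUnits hk f, ?_, ?_, fun u => ?_⟩
  · exact hnorm ▸ pellUnits_mem_positiveUnits_of_isFundamental _ hf
  · rw [hnorm, ← unitValue_apply, ← unitValue_apply, unitValue_pellUnits, unitValue_pellUnits]
  · rw [← unitValue_apply, unitValue_pellUnits]
    exact one_lt_zsqrtdToReal_fundamental hf
  · exact exists_eq_zpow_or_neg_zpow_pellUnits hp (by omega) hk hf (unitValue_mem u)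

/-- For a prime `p ≡ -1 (mod 16)`, `K' = ℚ(√(2√p)) ⊂ ℝ`, `k = ℚ(√p)`
its quadratic subfield, and `σ` the nontrivial automorphism of `K'` fixing `k`, there is a
totally positive unit `ξ` of `𝓞 K'` such that `(𝓞 K')ˣ` is generated by `-1, ξ, σ ξ` and
`ξ·σ(ξ)` is the fundamental unit of `k`. -/
theorem exists_totally_positive_generating_unit
    (p : ℕ) (hp : p.Prime) (hmod : p % 16 = 15)
    (K' k : IntermediateField ℚ ℝ)
    (hK' : K' = ℚ⟮Real.sqrt (2 * Real.sqrt p)⟯)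
    (hk : k = ℚ⟮Real.sqrt p⟯)
    [NumberField K'] [NumberField k]
    (σ : K' ≃ₐ[ℚ] K')
    (hσ : σ ≠ AlgEquiv.refl)
    (hσk : ∀ x : K', (x : ℝ) ∈ k → σ x = x) :
    ∃ ξ : (𝓞 K')ˣ,
      (∀ φ : K' →+* ℝ, 0 < φ ((ξ : 𝓞 K') : K')) ∧
      Subgroup.closure
        ({-1, ξ, Units.map (RingOfIntegers.mapRingHom σ).toMonoidHom ξ} :
          Set (𝓞 K')ˣ) = ⊤ ∧
      ∃ ε : (𝓞 k)ˣ,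
        ((((ξ * Units.map (RingOfIntegers.mapRingHom σ).toMonoidHom ξ : (𝓞 K')ˣ) :
            𝓞 K') : K') : ℝ) = (((ε : 𝓞 k) : k) : ℝ) ∧
        1 < (((ε : 𝓞 k) : k) : ℝ) ∧
        ∀ u : (𝓞 k)ˣ, ∃ n : ℤ, u = ε ^ n ∨ u = -(ε ^ n) :=
  exists_totally_positive_generating_unit_general p hp (by omega) K' k hK' hk σ hσ hσk
end
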